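/- arXiv:2511.18959 — 9 statements merged into one kernel-verified Lean document; each statement's English description precedes it below -/
import Mathlib

section
/- Let V be an abelian group equipped with a Cl(r)-representation (p_i, q_i), and let W := ⋂_{i ∈ [r]} ker(p_i). Then the ℤ-linear map W ⊗_ℤ F(r) → V determined by w ⊗ v_I ↦ q_I(w) is bijective, and it intertwines the Cl(r)-actions, where Cl(r) acts on W ⊗_ℤ F(r) through the second tensor factor. -/
/-!
Statement 0: Let `V` be an abelian group equipped with a `Cl(r)`-representation `(pᵢ, qᵢ)`,
and `W := ⋂ᵢ ker pᵢ`.  The ℤ-linear map `W ⊗_ℤ F(r) → V` determined by `w ⊗ v_I ↦ q_I w`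
is bijective and intertwines the `Cl(r)`-actions, where `Cl(r)` acts on `W ⊗ F(r)` through
the second tensor factor.  Here `F(r)` is the free ℤ-module on the subsets of `[r] = Fin r`.
-/

/-- The ordered product `q_I = q_{a_0} ∘ q_{a_1} ∘ ⋯ ∘ q_{a_k}` for `I = {a_0 < ⋯ < a_k}`. -/
def qProd {r : ℕ} {V : Type*} [AddCommGroup V] (q : Fin r → AddMonoid.End V)
    (I : Finset (Fin r)) : AddMonoid.End V :=
  ((I.sort (· ≤ ·)).map q).prod

/-- The ordered product `p_I = p_{a_k} ∘ p_{a_{k-1}} ∘ ⋯ ∘ p_{a_0}` for `I = {a_0 < ⋯ < a_k}`. -/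
def pProd {r : ℕ} {V : Type*} [AddCommGroup V] (p : Fin r → AddMonoid.End V)
    (I : Finset (Fin r)) : AddMonoid.End V :=
  ((I.sort (· ≤ ·)).reverse.map p).prod

/-- A `Cl(r)`-representation on an abelian group `V`. -/
def IsCliffordRep {r : ℕ} {V : Type*} [AddCommGroup V] (p q : Fin r → AddMonoid.End V) : Prop :=
  (∀ i, p i * p i = 0) ∧ (∀ i, q i * q i = 0) ∧
    (∀ i j, p i * p j + p j * p i = 0) ∧
    (∀ i j, q i * q j + q j * q i = 0) ∧
    (∀ i j, p i * q j + q j * p i = if i = j then 1 else 0)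

/-- `#{j ∈ I : j < i}`. -/
def signCount {r : ℕ} (I : Finset (Fin r)) (i : Fin r) : ℕ :=
  (I.filter (fun j => j < i)).card

/-- The action of `p_i` on the spin representation `F(r) = ⨁_{I ⊆ [r]} ℤ·v_I`. -/
noncomputable def pF {r : ℕ} (i : Fin r) :
    (Finset (Fin r) →₀ ℤ) →ₗ[ℤ] (Finset (Fin r) →₀ ℤ) :=
  Finsupp.lift (Finset (Fin r) →₀ ℤ) ℤ (Finset (Fin r))
    (fun I => if i ∈ I then ((-1 : ℤ) ^ signCount I i) • Finsupp.single (I.erase i) 1 else 0)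

/-- The action of `q_i` on the spin representation `F(r)`. -/
noncomputable def qF {r : ℕ} (i : Fin r) :
    (Finset (Fin r) →₀ ℤ) →ₗ[ℤ] (Finset (Fin r) →₀ ℤ) :=
  Finsupp.lift (Finset (Fin r) →₀ ℤ) ℤ (Finset (Fin r))
    (fun I => if i ∈ I then 0 else ((-1 : ℤ) ^ signCount I i) • Finsupp.single (insert i I) 1)

theorem endMul_apply {V : Type*} [AddCommGroup V] (f g : AddMonoid.End V) (v : V) :
    (f * g) v = f (g v) := rfl

theorem qProd_empty' {r : ℕ} {V : Type*} [AddCommGroup V] (q : Fin r → AddMonoid.End V) :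
    qProd q ∅ = 1 := by
  simp [qProd]

theorem qProd_insert_min {r : ℕ} {V : Type*} [AddCommGroup V] (q : Fin r → AddMonoid.End V)
    (a : Fin r) (s : Finset (Fin r)) (h : ∀ x ∈ s, a < x) :
    qProd q (insert a s) = q a * qProd q s := by
  have ha : a ∉ s := fun h' => lt_irrefl _ (h a h')
  unfold qProd
  rw [Finset.sort_insert _ (fun b hb => (h b hb).le) ha]
  simp

theorem signCount_insert_lt {r : ℕ} (a i : Fin r) (s : Finset (Fin r)) (h : ∀ x ∈ s, a < x)
    (hi : a < i) : signCount (insert a s) i = signCount s i + 1 := by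
  have ha : a ∉ s := fun h' => lt_irrefl _ (h a h')
  unfold signCount
  rw [Finset.filter_insert, if_pos hi, Finset.card_insert_of_notMem (by simp [ha])]

theorem signCount_eq_zero {r : ℕ} (i : Fin r) (s : Finset (Fin r)) (h : ∀ x ∈ s, i ≤ x) :
    signCount s i = 0 := by
  unfold signCount
  rw [Finset.card_eq_zero, Finset.filter_eq_empty_iff]
  intro x hx
  exact not_lt.2 (h x hx)

theorem q_qProd {r : ℕ} {V : Type*} [AddCommGroup V] (p q : Fin r → AddMonoid.End V)
    (hpq : IsCliffordRep p q) (i : Fin r) (v : V) (I : Finset (Fin r)) :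
    q i (qProd q I v) =
      if i ∈ I then 0 else ((-1 : ℤ) ^ signCount I i) • qProd q (insert i I) v := by
  obtain ⟨-, hq, -, hqq, -⟩ := hpq
  have hq' : ∀ i v, q i (q i v) = 0 := fun i v => DFunLike.congr_fun (hq i) v
  have hqq' : ∀ i j v, q i (q j v) = - q j (q i v) := fun i j v =>
    eq_neg_of_add_eq_zero_left (DFunLike.congr_fun (hqq i j) v)
  induction I using Finset.induction_on_min with
  | empty =>
    rw [qProd_insert_min q i ∅ (by simp)]
    simp [signCount]
  | insert a s h ih =>
    have ha : a ∉ s := fun h' => lt_irrefl _ (h a h')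
    rcases lt_trichotomy i a with hia | rfl | hia
    · have hlt : ∀ x ∈ insert a s, i < x := by
        intro x hx
        rcases Finset.mem_insert.1 hx with rfl | hx
        · exact hia
        · exact hia.trans (h x hx)
      have hi : i ∉ insert a s := fun h' => lt_irrefl _ (hlt i h')
      rw [if_neg hi, qProd_insert_min q i _ hlt, signCount_eq_zero i _ (fun x hx => (hlt x hx).le)]
      simp
    · rw [qProd_insert_min q i s h]
      simp [hq']
    · rw [qProd_insert_min q a s h, endMul_apply, hqq', ih,
        signCount_insert_lt a i s h hia]
      by_cases his : i ∈ s
      · simp [his]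
      · have hi : i ∉ insert a s := by simp [his, hia.ne']
        rw [if_neg his, if_neg hi, Finset.insert_comm, qProd_insert_min q a (insert i s)]
        · rw [map_zsmul, pow_succ]
          simp
        · intro x hx
          rcases Finset.mem_insert.1 hx with rfl | hx
          · exact hia
          · exact h x hx

theorem p_qProd {r : ℕ} {V : Type*} [AddCommGroup V] (p q : Fin r → AddMonoid.End V)
    (hpq : IsCliffordRep p q) (i : Fin r) (v : V) (hv : ∀ i, p i v = 0) (I : Finset (Fin r)) :
    p i (qProd q I v) =
      if i ∈ I then ((-1 : ℤ) ^ signCount I i) • qProd q (I.erase i) v else 0 := by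
  obtain ⟨-, -, -, -, hpq⟩ := hpq
  have h1 : ∀ i v, p i (q i v) = v - q i (p i v) := fun i v => by
    have := DFunLike.congr_fun (hpq i i) v
    rw [if_pos rfl] at this
    exact eq_sub_of_add_eq this
  have h2 : ∀ i j v, i ≠ j → p i (q j v) = - q j (p i v) := fun i j v hij => by
    have := DFunLike.congr_fun (hpq i j) v
    rw [if_neg hij] at this
    exact eq_neg_of_add_eq_zero_left this
  induction I using Finset.induction_on_min with
  | empty => simp [qProd_empty', hv]
  | insert a s h ih =>
    have ha : a ∉ s := fun h' => lt_irrefl _ (h a h')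
    rw [qProd_insert_min q a s h, endMul_apply]
    rcases lt_trichotomy i a with hia | rfl | hia
    · have his : i ∉ s := fun h' => lt_asymm hia (h i h')
      rw [h2 i a _ hia.ne, ih]
      simp [his, hia.ne]
    · rw [h1, ih, if_neg ha, if_pos (Finset.mem_insert_self _ _), Finset.erase_insert ha,
        signCount_eq_zero]
      · simp
      · intro x hx
        rcases Finset.mem_insert.1 hx with rfl | hx
        · exact le_rfl
        · exact (h x hx).le
    · rw [h2 i a _ hia.ne', ih, signCount_insert_lt a i s h hia]
      by_cases his : i ∈ s
      · rw [if_pos his, if_pos (Finset.mem_insert_of_mem his),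
          Finset.erase_insert_of_ne hia.ne, qProd_insert_min q a (s.erase i)]
        · rw [map_zsmul, pow_succ]
          simp
        · intro x hx
          exact h x (Finset.mem_of_mem_erase hx)
      · simp [his, hia.ne']

theorem qProd_indep {r : ℕ} {V : Type*} [AddCommGroup V] (p q : Fin r → AddMonoid.End V)
    (hpq : IsCliffordRep p q) (S : Finset (Fin r)) :
    ∀ (w : Finset (Fin r) → V), (∀ J i, p i (w J) = 0) →
      ∑ J ∈ S.powerset, qProd q J (w J) = 0 → ∀ J ∈ S.powerset, w J = 0 := by
  induction S using Finset.induction_on_min with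
  | empty =>
    intro w hw h J hJ
    simp [qProd_empty'] at h hJ
    rw [hJ, h]
  | insert a s h ih =>
    intro w hw hsum
    have ha : a ∉ s := fun h' => lt_irrefl _ (h a h')
    rw [Finset.sum_powerset_insert ha] at hsum
    have key : ∀ J ∈ s.powerset, w (insert a J) = 0 := by
      apply ih (fun J => w (insert a J)) (fun J i => hw _ i)
      have := congrArg (p a) hsum
      rw [map_add, map_sum, map_sum, map_zero, Finset.sum_eq_zero, zero_add] at this
      · rw [← this]
        refine Finset.sum_congr rfl fun J hJ => ?_
        rw [Finset.mem_powerset] at hJ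
        rw [p_qProd p q hpq a _ (hw _), if_pos (Finset.mem_insert_self _ _),
          Finset.erase_insert (fun h' => ha (hJ h')), signCount_eq_zero]
        · simp
        · intro x hx
          rcases Finset.mem_insert.1 hx with rfl | hx
          · exact le_rfl
          · exact (h x (hJ hx)).le
      · intro J hJ
        rw [Finset.mem_powerset] at hJ
        rw [p_qProd p q hpq a _ (hw _), if_neg (fun h' => ha (hJ h'))]
    rw [Finset.sum_eq_zero (s := s.powerset) (f := fun J => qProd q (insert a J) (w (insert a J)))
      (fun J hJ => by rw [key J hJ, map_zero]), add_zero] at hsum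
    have key2 := ih w hw hsum
    intro J hJ
    rw [Finset.mem_powerset] at hJ
    by_cases haJ : a ∈ J
    · rw [← Finset.insert_erase haJ]
      apply key
      rw [Finset.mem_powerset]
      rwa [← Finset.subset_insert_iff]
    · apply key2
      rw [Finset.mem_powerset]
      exact (Finset.subset_insert_iff_of_notMem haJ).1 hJ

theorem tensor_form {r : ℕ} {W : Type*} [AddCommGroup W]
    (x : TensorProduct ℤ W (Finset (Fin r) →₀ ℤ)) :
    ∃ w : Finset (Fin r) → W, x = ∑ J, w J ⊗ₜ[ℤ] Finsupp.single J 1 := by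
  induction x using TensorProduct.induction_on with
  | zero => exact ⟨0, by simp⟩
  | tmul w f =>
    refine ⟨fun J => f J • w, ?_⟩
    simp_rw [TensorProduct.smul_tmul]
    rw [← TensorProduct.tmul_sum]
    congr 1
    ext J
    simp
  | add x y hx hy =>
    obtain ⟨w, rfl⟩ := hx
    obtain ⟨w', rfl⟩ := hy
    exact ⟨w + w', by simp [TensorProduct.add_tmul, Finset.sum_add_distrib]⟩

theorem rep_mem {r : ℕ} {V : Type*} [AddCommGroup V] (p q : Fin r → AddMonoid.End V)
    (hpq : IsCliffordRep p q) (R : AddSubgroup V)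
    (hR : ∀ i, ∀ v ∈ R, q i v ∈ R) (hWR : ∀ v, (∀ i, p i v = 0) → v ∈ R)
    (S : Finset (Fin r)) : ∀ v, (∀ i, i ∉ S → p i v = 0) → v ∈ R := by
  obtain ⟨hp, -, hpp, -, hpq⟩ := hpq
  have hp' : ∀ i v, p i (p i v) = 0 := fun i v => DFunLike.congr_fun (hp i) v
  have hpp' : ∀ i j v, p i (p j v) = - p j (p i v) := fun i j v =>
    eq_neg_of_add_eq_zero_left (DFunLike.congr_fun (hpp i j) v)
  have h1 : ∀ i v, p i (q i v) + q i (p i v) = v := fun i v => by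
    have := DFunLike.congr_fun (hpq i i) v
    rw [if_pos rfl] at this
    exact this
  have h2 : ∀ i j v, i ≠ j → p i (q j v) = - q j (p i v) := fun i j v hij => by
    have := DFunLike.congr_fun (hpq i j) v
    rw [if_neg hij] at this
    exact eq_neg_of_add_eq_zero_left this
  induction S using Finset.induction_on with
  | empty => exact fun v hv => hWR v (fun i => hv i (by simp))
  | insert a s ha ih =>
    intro v hv
    rw [← h1 a v]
    refine R.add_mem (ih _ ?_) (hR a _ (ih _ ?_))
    · intro i hi
      by_cases hia : i = a
      · rw [hia, hp']
      · rw [hpp', h2 i a _ hia, hv i (by simp [hi, hia])]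
        simp
    · intro i hi
      by_cases hia : i = a
      · rw [hia, hp']
      · rw [hpp', hv i (by simp [hi, hia])]
        simp

theorem stmt_0 {r : ℕ} (hr : 0 < r) {V : Type} [AddCommGroup V]
    (p q : Fin r → AddMonoid.End V) (hpq : IsCliffordRep p q)
    (W : AddSubgroup V) (hW : ∀ v : V, v ∈ W ↔ ∀ i : Fin r, p i v = 0)
    (φ : TensorProduct ℤ W (Finset (Fin r) →₀ ℤ) →ₗ[ℤ] V)
    (hφ : ∀ (w : W) (I : Finset (Fin r)),
      φ (w ⊗ₜ[ℤ] Finsupp.single I 1) = qProd q I (w : V)) :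
    Function.Bijective φ ∧
      (∀ (i : Fin r) (x : TensorProduct ℤ W (Finset (Fin r) →₀ ℤ)),
        φ (LinearMap.lTensor W (pF i) x) = p i (φ x)) ∧
      (∀ (i : Fin r) (x : TensorProduct ℤ W (Finset (Fin r) →₀ ℤ)),
        φ (LinearMap.lTensor W (qF i) x) = q i (φ x)) := by
  have hP : ∀ (i : Fin r) (x : TensorProduct ℤ W (Finset (Fin r) →₀ ℤ)),
        φ (LinearMap.lTensor W (pF i) x) = p i (φ x) := by
    intro i x
    obtain ⟨w, rfl⟩ := tensor_form x
    simp only [map_sum, LinearMap.lTensor_tmul, hφ]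
    refine Finset.sum_congr rfl fun J _ => ?_
    rw [p_qProd p q hpq i _ ((hW _).1 (w J).2)]
    by_cases h : i ∈ J
    · simp only [pF, Finsupp.lift_apply, Finsupp.sum_single_index, zero_smul, one_smul, if_pos h]
      rw [TensorProduct.tmul_smul, map_zsmul, hφ]
    · simp [pF, h]
  have hQ : ∀ (i : Fin r) (x : TensorProduct ℤ W (Finset (Fin r) →₀ ℤ)),
        φ (LinearMap.lTensor W (qF i) x) = q i (φ x) := by
    intro i x
    obtain ⟨w, rfl⟩ := tensor_form x
    simp only [map_sum, LinearMap.lTensor_tmul, hφ]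
    refine Finset.sum_congr rfl fun J _ => ?_
    rw [q_qProd p q hpq i]
    by_cases h : i ∈ J
    · simp [qF, h]
    · simp only [qF, Finsupp.lift_apply, Finsupp.sum_single_index, zero_smul, one_smul, if_neg h]
      rw [TensorProduct.tmul_smul, map_zsmul, hφ]
  refine ⟨⟨?_, ?_⟩, hP, hQ⟩
  · rw [injective_iff_map_eq_zero]
    intro x hx
    obtain ⟨w, rfl⟩ := tensor_form x
    simp only [map_sum, hφ] at hx
    have := qProd_indep p q hpq Finset.univ (fun J => (w J : V))
      (fun J => (hW _).1 (w J).2) (by simpa using hx)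
    refine Finset.sum_eq_zero fun J _ => ?_
    have hJ : w J = 0 := Subtype.ext (this J (by simp))
    rw [hJ, TensorProduct.zero_tmul]
  · intro v
    have := rep_mem p q hpq φ.toAddMonoidHom.range ?_ ?_ Finset.univ v (by simp)
    · exact this
    · rintro i _ ⟨x, rfl⟩
      exact ⟨_, hQ i x⟩
    · intro v hv
      refine ⟨(⟨v, (hW v).2 hv⟩ : W) ⊗ₜ[ℤ] Finsupp.single ∅ 1, ?_⟩
      exact (hφ _ _).trans (by simp [qProd_empty'])
end

section
/- Let V be an abelian group equipped with a Cl(r)-representation (p_i, q_i). Then: (a) for every w ∈ V with p_i(w) = 0 for all i ∈ [r], one has p_{[r]}(q_{[r]}(w)) = w; and (b) for every w ∈ V with q_i(w) = 0 for all i ∈ [r], one has q_{[r]}(p_{[r]}(w)) = w. -/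
/-!
Statement 1: (a) for every `w ∈ V` with `pᵢ w = 0` for all `i`, one has
`p_{[r]} (q_{[r]} w) = w`; (b) dually with `p` and `q` exchanged.
-/

theorem aux_kill {ι V : Type*} [DecidableEq ι] [AddCommGroup V] (a b : ι → AddMonoid.End V)
    (h : ∀ i j, a i * b j + b j * a i = if i = j then 1 else 0) (w : V)
    (hw : ∀ i, a i w = 0) (i : ι) (l : List ι) (hi : i ∉ l) :
    a i ((l.map b).prod w) = 0 := by
  induction l with
  | nil => simpa using hw i
  | cons j l ih =>
    simp only [List.mem_cons, not_or] at hi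
    have h1 := DFunLike.congr_fun (h i j) ((l.map b).prod w)
    rw [if_neg hi.1] at h1
    have h2 : a i (b j ((l.map b).prod w)) + b j (a i ((l.map b).prod w)) = 0 := h1
    rw [ih hi.2, map_zero, add_zero] at h2
    rw [List.map_cons, List.prod_cons]
    exact h2

theorem aux_main {ι V : Type*} [DecidableEq ι] [AddCommGroup V] (a b : ι → AddMonoid.End V)
    (h : ∀ i j, a i * b j + b j * a i = if i = j then 1 else 0) (w : V)
    (hw : ∀ i, a i w = 0) (l : List ι) (hl : l.Nodup) :
    (l.reverse.map a).prod ((l.map b).prod w) = w := by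
  induction l with
  | nil => simp
  | cons j l ih =>
    rw [List.nodup_cons] at hl
    have h1 := DFunLike.congr_fun (h j j) ((l.map b).prod w)
    rw [if_pos rfl] at h1
    have h2 : a j (b j ((l.map b).prod w)) + b j (a j ((l.map b).prod w))
      = (l.map b).prod w := h1
    rw [aux_kill a b h w hw j l hl.1, map_zero, add_zero] at h2
    rw [List.map_cons, List.prod_cons, List.reverse_cons, List.map_append, List.prod_append,
      List.map_singleton, List.prod_singleton]
    change (l.reverse.map a).prod (a j (b j ((l.map b).prod w))) = w
    rw [h2]
    exact ih hl.2

theorem stmt_1 {r : ℕ} (hr : 0 < r) {V : Type} [AddCommGroup V]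
    (p q : Fin r → AddMonoid.End V) (hpq : IsCliffordRep p q) :
    (∀ w : V, (∀ i : Fin r, p i w = 0) →
      pProd p Finset.univ (qProd q Finset.univ w) = w) ∧
    (∀ w : V, (∀ i : Fin r, q i w = 0) →
      qProd q Finset.univ (pProd p Finset.univ w) = w) := by
  obtain ⟨-, -, -, -, h⟩ := hpq
  refine ⟨fun w hw => ?_, fun w hw => ?_⟩
  · exact aux_main p q h w hw _ (Finset.sort_nodup _ _)
  · have h' : ∀ i j, q i * p j + p j * q i = if i = j then 1 else 0 := by
      intro i j
      rw [add_comm, h j i]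
      simp only [eq_comm]
    have := aux_main q p h' w hw _
      (List.nodup_reverse.2 (Finset.sort_nodup (Finset.univ : Finset (Fin r)) (· ≤ ·)))
    rw [List.reverse_reverse] at this
    exact this
end

section
/- Let V be an abelian group equipped with a Cl(r)-representation (p_i, q_i). Then Σ_{I ⊆ [r]} q_I ∘ p_{[r]} ∘ q_{[r]} ∘ p_I = id_V, where the sum runs over all 2^r subsets I of [r]. -/
/-!
Statement 2: `Σ_{I ⊆ [r]} q_I ∘ p_{[r]} ∘ q_{[r]} ∘ p_I = id_V`.
-/

theorem anti_list_prod {R : Type*} [Ring R] (x : R) (L : List R)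
    (h : ∀ y ∈ L, x * y + y * x = 0) : x * L.prod = (-1) ^ L.length * (L.prod * x) := by
  induction L with
  | nil => simp
  | cons y L ih =>
    have h1 : x * y = -(y * x) := eq_neg_of_add_eq_zero_left (h y (by simp))
    have h2 := ih (fun z hz => h z (by simp [hz]))
    have h3 : y * (-1 : R) ^ L.length = (-1) ^ L.length * y :=
      ((Commute.neg_one_right y).pow_right _).eq
    rw [List.prod_cons, ← mul_assoc, h1, neg_mul, mul_assoc, h2, ← mul_assoc y, h3,
      List.length_cons, pow_succ]
    simp [mul_assoc]

theorem commute_anti2 {R : Type*} [Ring R] (x y z : R)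
    (h1 : x * z + z * x = 0) (h2 : y * z + z * y = 0) : Commute (x * y) z := by
  have h1 : x * z = -(z * x) := eq_neg_of_add_eq_zero_left h1
  have h2 : y * z = -(z * y) := eq_neg_of_add_eq_zero_left h2
  show x * y * z = z * (x * y)
  rw [mul_assoc, h2, mul_neg, ← mul_assoc, h1, neg_mul, neg_neg, mul_assoc]

theorem main_aux {r : ℕ} {V : Type*} [AddCommGroup V]
    (p q : Fin r → AddMonoid.End V) (hpq : IsCliffordRep p q) (s : Finset (Fin r)) :
    ∑ I ∈ s.powerset, qProd q I * pProd p s * qProd q s * pProd p I = 1 := by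
  obtain ⟨hp, hq, hpp, hqq, hc⟩ := hpq
  induction s using Finset.induction_on_min with
  | empty => simp [qProd, pProd]
  | insert a s ha ih =>
    have has : a ∉ s := fun h => lt_irrefl _ (ha a h)
    have key : ∀ I ⊆ s, qProd q (insert a I) = q a * qProd q I ∧
        pProd p (insert a I) = pProd p I * p a := by
      intro I hI
      have : (insert a I).sort (· ≤ ·) = a :: I.sort (· ≤ ·) :=
        Finset.sort_insert _ (fun b hb => (ha b (hI hb)).le) (fun h => has (hI h))
      simp [qProd, pProd, this]
    have hpq0 : ∀ b ∈ s, p a * q b + q b * p a = 0 := fun b hb => by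
      rw [hc, if_neg (ha b hb).ne]
    have hqp0 : ∀ b ∈ s, q a * p b + p b * q a = 0 := fun b hb => by
      rw [add_comm, hc, if_neg (ha b hb).ne']
    have cq : ∀ I ⊆ s, Commute (p a * q a) (qProd q I) := by
      intro I hI
      apply Commute.list_prod_right
      simp only [List.mem_map, Finset.mem_sort]
      rintro _ ⟨b, hb, rfl⟩
      exact commute_anti2 _ _ _ (hpq0 b (hI hb)) (hqq a b)
    have cp : ∀ I ⊆ s, Commute (p a * q a) (pProd p I) := by
      intro I hI
      apply Commute.list_prod_right
      simp only [List.mem_map, List.mem_reverse, Finset.mem_sort]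
      rintro _ ⟨b, hb, rfl⟩
      exact commute_anti2 _ _ _ (hpp a b) (hqp0 b (hI hb))
    have cT : ∀ I ⊆ s, p a * (qProd q I * pProd p s * qProd q s * pProd p I) =
        (qProd q I * pProd p s * qProd q s * pProd p I) * p a := by
      intro I hI
      have := anti_list_prod (p a) ((I.sort (· ≤ ·)).map q ++ (s.sort (· ≤ ·)).reverse.map p ++
        (s.sort (· ≤ ·)).map q ++ (I.sort (· ≤ ·)).reverse.map p) (by
          simp only [List.mem_append, List.mem_map, List.mem_reverse, Finset.mem_sort]
          rintro _ (((⟨b, hb, rfl⟩ | ⟨b, hb, rfl⟩) | ⟨b, hb, rfl⟩) | ⟨b, hb, rfl⟩)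
          · exact hpq0 b (hI hb)
          · exact hpp a b
          · exact hpq0 b hb
          · exact hpp a b)
      rw [Even.neg_one_pow (by
        simp only [List.length_append, List.length_map, List.length_reverse]
        exact ⟨(I.sort (· ≤ ·)).length + (s.sort (· ≤ ·)).length, by ring⟩), one_mul] at this
      simpa only [List.prod_append, qProd, pProd] using this
    have hP : pProd p (insert a s) * qProd q (insert a s) =
        p a * q a * (pProd p s * qProd q s) := by
      rw [(key s subset_rfl).1, (key s subset_rfl).2]
      have := (cp s subset_rfl).eq
      calc _ = (pProd p s * (p a * q a)) * qProd q s := by noncomm_ring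
        _ = _ := by rw [← this]; noncomm_ring
    have t1 : ∀ I ⊆ s, qProd q I * pProd p (insert a s) * qProd q (insert a s) * pProd p I
        = p a * q a * (qProd q I * pProd p s * qProd q s * pProd p I) := by
      intro I hI
      rw [mul_assoc (qProd q I), hP, ← mul_assoc (qProd q I), ← (cq I hI).eq]
      simp only [mul_assoc]
    have hqpq : q a * (p a * q a) = q a := by
      have h := hc a a
      rw [if_pos rfl] at h
      rw [eq_sub_of_add_eq h, mul_sub, ← mul_assoc, hq]; simp
    have t2 : ∀ I ⊆ s, qProd q (insert a I) * pProd p (insert a s) * qProd q (insert a s) *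
        pProd p (insert a I)
        = q a * p a * (qProd q I * pProd p s * qProd q s * pProd p I) := by
      intro I hI
      rw [(key I hI).1, (key I hI).2]
      calc _ = q a * (qProd q I * pProd p (insert a s) * qProd q (insert a s) * pProd p I) * p a := by
            simp only [mul_assoc]
        _ = (q a * (p a * q a)) * ((qProd q I * pProd p s * qProd q s * pProd p I) * p a) := by
            rw [t1 I hI]; simp only [mul_assoc]
        _ = _ := by rw [hqpq, ← cT I hI, ← mul_assoc]
    rw [Finset.sum_powerset_insert has,
      Finset.sum_congr rfl (fun I hI => t1 I (Finset.mem_powerset.1 hI)),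
      Finset.sum_congr rfl (fun I hI => t2 I (Finset.mem_powerset.1 hI)),
      ← Finset.mul_sum, ← Finset.mul_sum, ih, mul_one, mul_one, hc, if_pos rfl]

theorem stmt_2 {r : ℕ} (hr : 0 < r) {V : Type} [AddCommGroup V]
    (p q : Fin r → AddMonoid.End V) (hpq : IsCliffordRep p q) :
    ∑ I : Finset (Fin r),
      qProd q I * pProd p Finset.univ * qProd q Finset.univ * pProd p I = 1 := by
  have := main_aux p q hpq Finset.univ
  rwa [Finset.powerset_univ] at this
end

section
/- Let W, V be abelian groups, let ≤ be a linear order on the set of all subsets of [r], and let 𝔢_I : W → V and 𝔣_I : V → W (I ⊆ [r]) be additive maps such that 𝔣_I ∘ 𝔢_J = δ_{IJ}·id_W whenever J ≤ I. Define the orthogonalization e_I := 𝔢_I and f_I := 𝔣_I ∘ (id_V − 𝔢_{J_1}∘𝔣_{J_1}) ∘ ⋯ ∘ (id_V − 𝔢_{J_m}∘𝔣_{J_m}), where J_1 < J_2 < ⋯ < J_m enumerates the subsets J with I < J. Then: (a) f_J ∘ e_I = δ_{IJ}·id_W for ALL subsets I, J ⊆ [r]; and (b) (id_V − 𝔢_{K_1}∘𝔣_{K_1})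 ∘ ⋯ ∘ (id_V − 𝔢_{K_N}∘𝔣_{K_N}) = id_V − Σ_{I ⊆ [r]} e_I ∘ f_I, where K_1 < K_2 < ⋯ < K_N enumerates all subsets of [r] in increasing order. -/
/-!
Statement 3: orthogonalization of a semi-orthogonal family of maps.

The linear order on the set of all subsets of `[r]` is encoded by an arbitrary
bijection `π : Finset (Fin r) ≃ Fin (2 ^ r)`:  `I ≤ J` iff `π I ≤ π J`.
-/

/-- View an additive endomorphism as an element of the endomorphism ring. -/
def toEnd {V : Type*} [AddCommGroup V] (f : V →+ V) : AddMonoid.End V := f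

/-- The ordered product `(1 - 𝔢_{J₁}∘𝔣_{J₁}) ∘ ⋯ ∘ (1 - 𝔢_{J_m}∘𝔣_{J_m})`, where
`J₁ < ⋯ < J_m` enumerates the subsets `J` with `I < J` in increasing order (with respect to
the linear order encoded by `π`). -/
def afterProd {r : ℕ} {W V : Type*} [AddCommGroup W] [AddCommGroup V]
    (π : Finset (Fin r) ≃ Fin (2 ^ r))
    (fe : Finset (Fin r) → W →+ V) (ff : Finset (Fin r) → V →+ W)
    (I : Finset (Fin r)) : AddMonoid.End V :=
  (((List.finRange (2 ^ r)).filter (fun s => π I < s)).map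
    (fun s => (1 : AddMonoid.End V) - toEnd ((fe (π.symm s)).comp (ff (π.symm s))))).prod

/-- The orthogonalization `f_I := 𝔣_I ∘ (1 - 𝔢_{J₁}∘𝔣_{J₁}) ∘ ⋯ ∘ (1 - 𝔢_{J_m}∘𝔣_{J_m})`. -/
def orthF {r : ℕ} {W V : Type*} [AddCommGroup W] [AddCommGroup V]
    (π : Finset (Fin r) ≃ Fin (2 ^ r))
    (fe : Finset (Fin r) → W →+ V) (ff : Finset (Fin r) → V →+ W)
    (I : Finset (Fin r)) : V →+ W :=
  (ff I).comp (afterProd π fe ff I)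

/-- The full ordered product `(1 - 𝔢_{K₁}∘𝔣_{K₁}) ∘ ⋯ ∘ (1 - 𝔢_{K_N}∘𝔣_{K_N})` over all
subsets of `[r]` in increasing order. -/
def fullProd {r : ℕ} {W V : Type*} [AddCommGroup W] [AddCommGroup V]
    (π : Finset (Fin r) ≃ Fin (2 ^ r))
    (fe : Finset (Fin r) → W →+ V) (ff : Finset (Fin r) → V →+ W) : AddMonoid.End V :=
  ((List.finRange (2 ^ r)).map
    (fun s => (1 : AddMonoid.End V) - toEnd ((fe (π.symm s)).comp (ff (π.symm s))))).prod

theorem aux_fix {n : ℕ} {V : Type} [AddCommGroup V] (p : Fin n → AddMonoid.End V) (v : V)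
    (l : List (Fin n)) (h : ∀ s ∈ l, p s v = 0) :
    (l.map (fun s => (1 : AddMonoid.End V) - p s)).prod v = v := by
  induction l with
  | nil => simp
  | cons a l ih =>
    have h1 := ih (fun s hs => h s (List.mem_cons_of_mem _ hs))
    have h2 := h a List.mem_cons_self
    rw [List.map_cons, List.prod_cons, AddMonoid.End.coe_mul, Function.comp_apply, h1]
    change v - p a v = v
    rw [h2]
    simp

theorem aux_kill_s3 {n : ℕ} {V : Type} [AddCommGroup V] (p : Fin n → AddMonoid.End V) (v : V)
    (i : Fin n) (hi : p i v = v) (l : List (Fin n)) (hl : l.Pairwise (· < ·)) (hil : i ∈ l)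
    (h : ∀ s ∈ l, i < s → p s v = 0) :
    (l.map (fun s => (1 : AddMonoid.End V) - p s)).prod v = 0 := by
  induction l with
  | nil => simp at hil
  | cons a l ih =>
    rw [List.pairwise_cons] at hl
    rw [List.map_cons, List.prod_cons, AddMonoid.End.coe_mul, Function.comp_apply]
    by_cases hia : i = a
    · subst hia
      rw [aux_fix p v l (fun s hs => h s (List.mem_cons_of_mem _ hs) (hl.1 s hs))]
      change v - p i v = 0
      rw [hi]
      simp
    · have : i ∈ l := by simpa [hia] using hil
      rw [ih hl.2 this (fun s hs => h s (List.mem_cons_of_mem _ hs)), map_zero]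

theorem aux_sum {n : ℕ} {R : Type} [Ring R] (p : Fin n → R)
    (l : List (Fin n)) (hl : l.Pairwise (· < ·)) :
    (l.map (fun s => 1 - p s)).prod =
      1 - (l.map (fun s => p s *
        ((l.filter (fun t => s < t)).map (fun s => 1 - p s)).prod)).sum := by
  induction l with
  | nil => simp
  | cons a l ih =>
    rw [List.pairwise_cons] at hl
    have h1 : (a :: l).filter (fun t => a < t) = l := by
      rw [List.filter_cons_of_neg (by simp), List.filter_eq_self]
      intro t ht
      simpa using hl.1 t ht
    have h2 : l.map (fun s => p s *
        (((a :: l).filter (fun t => s < t)).map (fun s => 1 - p s)).prod) =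
        l.map (fun s => p s * ((l.filter (fun t => s < t)).map (fun s => 1 - p s)).prod) := by
      apply List.map_congr_left
      intro s hs
      rw [List.filter_cons_of_neg (by simpa using (hl.1 s hs).le)]
    rw [List.map_cons, List.map_cons, List.sum_cons, h1, h2, List.prod_cons, sub_mul, one_mul]
    nth_rewrite 1 [ih hl.2]
    abel

theorem stmt_3 {r : ℕ} (hr : 0 < r) {W V : Type} [AddCommGroup W] [AddCommGroup V]
    (π : Finset (Fin r) ≃ Fin (2 ^ r))
    (fe : Finset (Fin r) → W →+ V) (ff : Finset (Fin r) → V →+ W)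
    (hso : ∀ I J : Finset (Fin r), π J ≤ π I →
      (ff I).comp (fe J) = if I = J then AddMonoidHom.id W else 0) :
    (∀ I J : Finset (Fin r),
      (orthF π fe ff J).comp (fe I) = if I = J then AddMonoidHom.id W else 0) ∧
    fullProd π fe ff =
      1 - ∑ I : Finset (Fin r), toEnd ((fe I).comp (orthF π fe ff I)) := by
  constructor
  · intro I J
    ext x
    let p : Fin (2 ^ r) → AddMonoid.End V :=
      fun s => toEnd ((fe (π.symm s)).comp (ff (π.symm s)))
    have hz : ∀ s : Fin (2 ^ r), π I < s → p s (fe I x) = 0 := by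
      intro s hs
      have h := DFunLike.congr_fun (hso (π.symm s) I (by simpa using hs.le)) x
      have hne : π.symm s ≠ I := by
        rintro rfl
        simp at hs
      rw [if_neg hne] at h
      change fe (π.symm s) (ff (π.symm s) (fe I x)) = 0
      have h' : ff (π.symm s) (fe I x) = 0 := h
      rw [h', map_zero]
    have hi : p (π I) (fe I x) = fe I x := by
      have h := DFunLike.congr_fun (hso I I le_rfl) x
      rw [if_pos rfl] at h
      have h' : ff I (fe I x) = x := h
      change fe (π.symm (π I)) (ff (π.symm (π I)) (fe I x)) = fe I x
      rw [π.symm_apply_apply, h']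
    change ff J ((((List.finRange (2 ^ r)).filter (fun s => π J < s)).map
      (fun s => (1 : AddMonoid.End V) - p s)).prod (fe I x)) = _
    rcases le_or_gt (π I) (π J) with hIJ | hIJ
    · rw [aux_fix p (fe I x) _ (fun s hs => hz s (lt_of_le_of_lt hIJ (by simpa using hs)))]
      have h := DFunLike.congr_fun (hso J I hIJ) x
      simp only [eq_comm (a := I)]
      exact h
    · have hne : I ≠ J := by
        rintro rfl
        exact lt_irrefl _ hIJ
      rw [aux_kill_s3 p (fe I x) (π I) hi _ ((List.pairwise_lt_finRange _).filter _)
        (by simpa using hIJ) (fun s _ => hz s), map_zero, if_neg hne]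
      rfl
  · have h := aux_sum (fun s => toEnd ((fe (π.symm s)).comp (ff (π.symm s))))
      (List.finRange (2 ^ r)) (List.pairwise_lt_finRange _)
    unfold fullProd
    rw [h, ← List.ofFn_eq_map, List.sum_ofFn, ← Equiv.sum_comp π]
    congr 1
    apply Finset.sum_congr rfl
    intro I _
    rw [π.symm_apply_apply]
    rfl
end

section
/- Let W, V be abelian groups, (p_i, q_i) a Cl(r)-representation on V, and e : W → V, f : V → W additive maps with p_i ∘ e = 0 and f ∘ q_i = 0 for all i ∈ [r], f ∘ e = id_W, and e ∘ f = p_{[r]} ∘ q_{[r]}. Set e_I := q_I ∘ e and f_I := f ∘ p_I for I ⊆ [r]. Then for each i ∈ [r]: p_i = Σ_{I ⊆ [r]∖{i}} (−1)^{#{j ∈ I : j < i}} e_I ∘ f_{I∪{i}} and q_i = Σ_{I ⊆ [r]∖{i}} (−1)^{#{j ∈ I : j < i}} e_{I∪{i}} ∘ f_I, as additive endomorphisms of V. -/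
lemma aux_sort_max {r : ℕ} (a : Fin r) (T : Finset (Fin r)) (h : ∀ x ∈ T, x < a) :
    (insert a T).sort (· ≤ ·) = T.sort (· ≤ ·) ++ [a] := by
  have ha : a ∉ T := fun h' => lt_irrefl _ (h a h')
  have hp : ((insert a T).sort (· ≤ ·)).Perm (T.sort (· ≤ ·) ++ [a]) := by
    rw [List.perm_ext_iff_of_nodup (Finset.sort_nodup _ _)]
    · intro x
      simp [or_comm]
    · rw [List.nodup_append]
      refine ⟨Finset.sort_nodup _ _, by simp, ?_⟩
      intro x hx y hy
      simp at hx hy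
      subst hy
      exact (h x hx).ne
  refine hp.eq_of_pairwise (le := (· ≤ ·)) (fun x y _ _ h1 h2 => le_antisymm h1 h2) (Finset.pairwise_sort _ _) ?_
  rw [List.pairwise_append]
  refine ⟨Finset.pairwise_sort _ _, by simp, ?_⟩
  intro x hx y hy
  simp at hx hy
  subst hy
  exact (h x hx).le

lemma aux_q_max {r : ℕ} {V : Type*} [AddCommGroup V] (q : Fin r → AddMonoid.End V)
    (a : Fin r) (T : Finset (Fin r)) (h : ∀ x ∈ T, x < a) :
    qProd q (insert a T) = qProd q T * q a := by
  simp [qProd, aux_sort_max a T h]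

lemma aux_p_max {r : ℕ} {V : Type*} [AddCommGroup V] (p : Fin r → AddMonoid.End V)
    (a : Fin r) (T : Finset (Fin r)) (h : ∀ x ∈ T, x < a) :
    pProd p (insert a T) = p a * pProd p T := by
  simp [pProd, aux_sort_max a T h]

lemma aux_q_anti {r : ℕ} {V : Type*} [AddCommGroup V] (q : Fin r → AddMonoid.End V)
    (x : AddMonoid.End V) (T : Finset (Fin r)) (h : ∀ j ∈ T, x * q j = - (q j * x)) :
    x * qProd q T = (-1) ^ T.card * (qProd q T * x) := by
  induction T using Finset.induction_on_max with
  | empty => simp [qProd]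
  | insert a T ha ih =>
    have ha' : a ∉ T := fun h' => lt_irrefl _ (ha a h')
    rw [aux_q_max q a T ha, Finset.card_insert_of_notMem ha', ← mul_assoc,
      ih (fun j hj => h j (Finset.mem_insert_of_mem hj)), mul_assoc, mul_assoc,
      h a (Finset.mem_insert_self _ _), pow_succ]
    simp [mul_assoc]

lemma aux_p_anti {r : ℕ} {V : Type*} [AddCommGroup V] (p : Fin r → AddMonoid.End V)
    (x : AddMonoid.End V) (T : Finset (Fin r)) (h : ∀ j ∈ T, x * p j = - (p j * x)) :
    x * pProd p T = (-1) ^ T.card * (pProd p T * x) := by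
  induction T using Finset.induction_on_max with
  | empty => simp [pProd]
  | insert a T ha ih =>
    have ha' : a ∉ T := fun h' => lt_irrefl _ (ha a h')
    have hc : p a * (-1) ^ T.card = (-1) ^ T.card * p a :=
      ((Commute.neg_one_right (p a)).pow_right _).eq
    rw [aux_p_max p a T ha, Finset.card_insert_of_notMem ha', ← mul_assoc,
      h a (Finset.mem_insert_self _ _), neg_mul, mul_assoc,
      ih (fun j hj => h j (Finset.mem_insert_of_mem hj)), ← mul_assoc, hc, pow_succ]
    simp [mul_assoc]

lemma aux_pq_comm {r : ℕ} {V : Type*} [AddCommGroup V] (p q : Fin r → AddMonoid.End V)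
    (x : AddMonoid.End V) (T : Finset (Fin r)) (h : ∀ j ∈ T, x * p j = - (p j * x))
    (h' : ∀ j ∈ T, x * q j = - (q j * x)) :
    x * (pProd p T * qProd q T) = (pProd p T * qProd q T) * x := by
  have hc : pProd p T * (-1) ^ T.card = (-1) ^ T.card * pProd p T :=
      ((Commute.neg_one_right (pProd p T)).pow_right _).eq
  rw [← mul_assoc, aux_p_anti p x T h, mul_assoc, mul_assoc, aux_q_anti q x T h',
    ← mul_assoc (pProd p T), hc, mul_assoc, ← mul_assoc, ← pow_add, Even.neg_one_pow ⟨_, rfl⟩,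
    one_mul, mul_assoc]

lemma aux_q_insert {r : ℕ} {V : Type*} [AddCommGroup V] (q : Fin r → AddMonoid.End V)
    (hq : ∀ i j, q i * q j = - (q j * q i)) (i : Fin r) (T : Finset (Fin r)) (hi : i ∉ T) :
    q i * qProd q T = (-1) ^ signCount T i * qProd q (insert i T) := by
  induction T using Finset.induction_on_max with
  | empty => simp [qProd, signCount]
  | insert a T ha ih =>
    have hi' : i ∉ T := fun h => hi (Finset.mem_insert_of_mem h)
    have hia : i ≠ a := fun h => hi (h ▸ Finset.mem_insert_self _ _)
    rcases lt_or_gt_of_ne hia with hlt | hgt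
    · have hs : signCount (insert a T) i = signCount T i := by
        simp [signCount, Finset.filter_insert, not_lt_of_gt hlt]
      rw [hs, aux_q_max q a T ha, ← mul_assoc, ih hi', Finset.insert_comm,
        aux_q_max q a (insert i T), mul_assoc]
      intro x hx
      rcases Finset.mem_insert.1 hx with rfl | hx
      · exact hlt
      · exact ha x hx
    · have hall : ∀ x ∈ insert a T, x < i := by
        intro x hx
        rcases Finset.mem_insert.1 hx with rfl | hx
        · exact hgt
        · exact (ha x hx).trans hgt
      have hs : signCount (insert a T) i = (insert a T).card := by
        rw [signCount, Finset.filter_true_of_mem hall]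
      rw [hs, aux_q_max q i _ hall]
      exact aux_q_anti q (q i) _ (fun j _ => hq i j)

lemma aux_complete {r : ℕ} {V : Type*} [AddCommGroup V] (p q : Fin r → AddMonoid.End V)
    (hpq : IsCliffordRep p q) (T : Finset (Fin r)) :
    ∑ I ∈ T.powerset, qProd q I * (pProd p T * qProd q T) * pProd p I = 1 := by
  obtain ⟨hpp, hqq, hp, hq, hpq⟩ := hpq
  induction T using Finset.induction_on_max with
  | empty => simp [pProd, qProd]
  | insert a T ha ih =>
    have ha' : a ∉ T := fun h' => lt_irrefl _ (ha a h')
    rw [Finset.sum_powerset_insert ha', ← Finset.sum_add_distrib, ← ih]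
    refine Finset.sum_congr rfl fun I hI => ?_
    have hI' : ∀ x ∈ I, x < a := fun x hx => ha x (Finset.mem_powerset.1 hI hx)
    have hne : ∀ j ∈ T, a ≠ j := fun j hj => (ha j hj).ne'
    have c1 : p a * (pProd p T * qProd q T) = (pProd p T * qProd q T) * p a := by
      refine aux_pq_comm p q _ T (fun j _ => eq_neg_of_add_eq_zero_left (hp a j)) fun j hj => ?_
      have := hpq a j
      rw [if_neg (hne j hj)] at this
      exact eq_neg_of_add_eq_zero_left this
    have c2 : q a * (pProd p T * qProd q T) = (pProd p T * qProd q T) * q a := by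
      refine aux_pq_comm p q _ T (fun j hj => ?_) (fun j _ => eq_neg_of_add_eq_zero_left (hq a j))
      have := hpq j a
      rw [if_neg (hne j hj).symm] at this
      exact eq_neg_of_add_eq_zero_right this
    have h1 : p a * q a + q a * p a = 1 := by simpa using hpq a a
    have h2 : q a * p a * (q a * p a) = q a * p a := by
      have : p a * q a = 1 - q a * p a := eq_sub_of_add_eq h1
      calc q a * p a * (q a * p a) = q a * (p a * q a) * p a := by noncomm_ring
        _ = q a * p a - (q a * q a) * p a * p a := by rw [this]; noncomm_ring
        _ = _ := by rw [hqq]; simp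
    rw [aux_q_max q a T ha, aux_p_max p a T ha, aux_q_max q a I hI', aux_p_max p a I hI']
    generalize pProd p T = P at *
    generalize qProd q T = Q at *
    have e1 : p a * P * (Q * q a) = P * Q * (p a * q a) := by
      calc _ = p a * (P * Q) * q a := by noncomm_ring
        _ = _ := by rw [c1]; noncomm_ring
    rw [e1]
    calc _ = qProd q I * (P * Q) * (p a * q a) * pProd p I +
          qProd q I * (q a * (P * Q)) * (p a * q a) * p a * pProd p I := by noncomm_ring
      _ = qProd q I * (P * Q) * (p a * q a) * pProd p I +
          qProd q I * (P * Q) * (q a * p a * (q a * p a)) * pProd p I := by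
            rw [c2]; noncomm_ring
      _ = qProd q I * (P * Q) * (p a * q a + q a * p a) * pProd p I := by
            rw [h2]; noncomm_ring
      _ = _ := by rw [h1, mul_one]

lemma aux_split {r : ℕ} {M : Type*} [AddCommMonoid M] (i : Fin r) (F : Finset (Fin r) → M) :
    ∑ I, F I = ∑ I ∈ Finset.univ.filter (fun I : Finset (Fin r) => i ∉ I), (F I + F (insert i I)) := by
  have h0 : Finset.univ.filter (fun I : Finset (Fin r) => i ∉ I) =
      (Finset.univ.erase i).powerset := by
    ext I
    simp [Finset.subset_erase]
  rw [h0, Finset.sum_add_distrib, ← Finset.sum_powerset_insert (Finset.notMem_erase _ _),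
    Finset.insert_erase (Finset.mem_univ _), Finset.powerset_univ]

theorem stmt_5 {r : ℕ} (hr : 0 < r) {W V : Type} [AddCommGroup W] [AddCommGroup V]
    (p q : Fin r → AddMonoid.End V) (hpq : IsCliffordRep p q)
    (e : W →+ V) (f : V →+ W)
    (hpe : ∀ i : Fin r, (p i).comp e = 0)
    (hfq : ∀ i : Fin r, f.comp (q i) = 0)
    (hfe : f.comp e = AddMonoidHom.id W)
    (hef : e.comp f = (pProd p Finset.univ).comp (qProd q Finset.univ)) :
    ∀ i : Fin r,
      p i = ∑ I ∈ Finset.univ.filter (fun I : Finset (Fin r) => i ∉ I),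
        ((-1 : ℤ) ^ signCount I i) •
          toEnd (((qProd q I).comp e).comp (f.comp (pProd p (insert i I)))) ∧
      q i = ∑ I ∈ Finset.univ.filter (fun I : Finset (Fin r) => i ∉ I),
        ((-1 : ℤ) ^ signCount I i) •
          toEnd (((qProd q (insert i I)).comp e).comp (f.comp (pProd p I))) := by
  intro i
  have hc := aux_complete p q hpq Finset.univ
  obtain ⟨hpp, hqq, hp, hq, hpq⟩ := hpq
  obtain ⟨E, hE⟩ : ∃ E : AddMonoid.End V, E = pProd p Finset.univ * qProd q Finset.univ := ⟨_, rfl⟩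
  have hE' : ∀ v, e (f v) = E v := by
    intro v
    rw [hE]
    exact DFunLike.congr_fun hef v
  have hT : ∀ A B : AddMonoid.End V, toEnd ((A.comp e).comp (f.comp B)) = A * E * B := by
    intro A B
    ext v
    exact congrArg A (hE' (B v))
  have hpE : ∀ i, p i * E = 0 := by
    intro i
    ext v
    change p i (E v) = 0
    rw [← hE']
    exact DFunLike.congr_fun (hpe i) (f v)
  have hq' : ∀ i j, q i * q j = - (q j * q i) := fun i j => eq_neg_of_add_eq_zero_left (hq i j)
  have hsg : ∀ (n : ℕ) (x : AddMonoid.End V), ((-1 : ℤ) ^ n) • x = (-1) ^ n * x := by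
    intro n x
    rw [zsmul_eq_mul]
    push_cast
    rfl
  have hins : ∀ I, i ∉ I → qProd q (insert i I) = (-1) ^ signCount I i * (q i * qProd q I) := by
    intro I hI
    rw [aux_q_insert q hq' i I hI, ← mul_assoc, ← pow_add, Even.neg_one_pow ⟨_, rfl⟩, one_mul]
  have hpq0 : ∀ I, i ∉ I → p i * (qProd q I * E) = 0 := by
    intro I hI
    rw [← mul_assoc, aux_q_anti q (p i) I, mul_assoc, mul_assoc, hpE, mul_zero, mul_zero]
    intro j hj
    have := hpq i j
    have hij : i ≠ j := fun h => hI (h ▸ hj)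
    rw [if_neg hij] at this
    exact eq_neg_of_add_eq_zero_left this
  have h1 : p i * q i = 1 - q i * p i := eq_sub_of_add_eq (by simpa using hpq i i)
  rw [← hE, Finset.powerset_univ, aux_split i] at hc
  have hcm : ∀ (x : AddMonoid.End V) (n : ℕ), x * (-1) ^ n = (-1) ^ n * x :=
    fun x n => ((Commute.neg_one_right x).pow_right _).eq
  constructor
  · conv_lhs => rw [← mul_one (p i), ← hc, Finset.mul_sum]
    refine Finset.sum_congr rfl fun I hI => ?_
    have hI' : i ∉ I := by simpa using hI
    rw [hT, hsg, mul_add, ← mul_assoc, hpq0 I hI', zero_mul, zero_add, hins I hI']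
    rw [← mul_assoc, ← mul_assoc, ← mul_assoc (p i), hcm, mul_assoc ((-1) ^ _),
      ← mul_assoc (p i), h1, mul_assoc ((-1) ^ _), mul_assoc ((-1) ^ _), sub_mul, sub_mul,
      mul_assoc (q i * p i), mul_assoc (q i), hpq0 I hI']
    simp
  · conv_lhs => rw [← mul_one (q i), ← hc, Finset.mul_sum]
    refine Finset.sum_congr rfl fun I hI => ?_
    have hI' : i ∉ I := by simpa using hI
    have hz : q i * qProd q (insert i I) = 0 := by
      rw [hins I hI', ← mul_assoc, hcm, mul_assoc, ← mul_assoc (q i), hqq, zero_mul, mul_zero]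
    rw [hT, hsg, mul_add, ← mul_assoc, ← mul_assoc, ← mul_assoc, ← mul_assoc, hz,
      aux_q_insert q hq' i I hI']
    simp [mul_assoc]
end

section
/- For every x in the left ideal 𝔍(r) of 𝔈(r) and every i ∈ [r], the elements x·P_{0,i}, x·Q_{0,i}, x·E, and x·F·P_{0,[r]}·Q_{0,[r]} all lie in 𝔍(r). Consequently, right multiplication by P_{0,i}, by Q_{0,i}, by E, and by F·P_{0,[r]}·Q_{0,[r]} descends to well-defined additive endomorphisms of the quotient left 𝔈(r)-module Λ_r = 𝔈(r)/𝔍(r). -/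
/-- Generators of the infinite-dimensional Clifford algebra `𝔈(r)`. -/
inductive EGen (r : ℕ) : Type
  | P (a : ℤ) (i : Fin r)
  | Q (a : ℤ) (i : Fin r)
  | E
  | F

/-- A generator, viewed inside the free algebra. -/
noncomputable def eg {r : ℕ} (g : EGen r) : FreeAlgebra ℤ (EGen r) := FreeAlgebra.ι ℤ g

/-- The defining relations of `𝔈(r)`. -/
inductive ERel (r : ℕ) : FreeAlgebra ℤ (EGen r) → FreeAlgebra ℤ (EGen r) → Prop
  | Psq : ∀ (a : ℤ) (i : Fin r), ERel r (eg (.P a i) * eg (.P a i)) 0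
  | Qsq : ∀ (a : ℤ) (i : Fin r), ERel r (eg (.Q a i) * eg (.Q a i)) 0
  | EP : ∀ (a : ℤ) (i : Fin r),
      ERel r (eg .E * eg (.P a i)) (eg (.P (a - 1) i) * eg .E)
  | EQ : ∀ (a : ℤ) (i : Fin r),
      ERel r (eg .E * eg (.Q a i)) (eg (.Q (a - 1) i) * eg .E)
  | PP : ∀ (a b : ℤ) (i j : Fin r),
      ERel r (eg (.P a i) * eg (.P b j) + eg (.P b j) * eg (.P a i)) 0
  | QQ : ∀ (a b : ℤ) (i j : Fin r),
      ERel r (eg (.Q a i) * eg (.Q b j) + eg (.Q b j) * eg (.Q a i)) 0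
  | PQ : ∀ (a b : ℤ) (i j : Fin r),
      ERel r (eg (.P a i) * eg (.Q b j) + eg (.Q b j) * eg (.P a i))
        (if i = j ∧ a = b then 1 else 0)
  | EFone : ERel r (eg .E * eg .F) 1
  | FEone : ERel r (eg .F * eg .E) 1

/-- The infinite-dimensional Clifford algebra `𝔈(r)`, presented by generators and
relations. -/
abbrev EAlg (r : ℕ) := RingQuot (ERel r)

/-- The generator `P_{a,i}` of `𝔈(r)`. -/
noncomputable def genP {r : ℕ} (a : ℤ) (i : Fin r) : EAlg r :=
  RingQuot.mkRingHom (ERel r) (eg (.P a i))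

/-- The generator `Q_{a,i}` of `𝔈(r)`. -/
noncomputable def genQ {r : ℕ} (a : ℤ) (i : Fin r) : EAlg r :=
  RingQuot.mkRingHom (ERel r) (eg (.Q a i))

/-- The generator `E` of `𝔈(r)`. -/
noncomputable def genE {r : ℕ} : EAlg r := RingQuot.mkRingHom (ERel r) (eg .E)

/-- The generator `F` of `𝔈(r)`. -/
noncomputable def genF {r : ℕ} : EAlg r := RingQuot.mkRingHom (ERel r) (eg .F)

/-- The ordered product `P_{a,I} := P_{a,a_k} ⋯ P_{a,a_0}` for `I = {a_0 < ⋯ < a_k}`. -/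
noncomputable def genPI {r : ℕ} (a : ℤ) (I : Finset (Fin r)) : EAlg r :=
  ((I.sort (· ≤ ·)).reverse.map (genP a)).prod

/-- The ordered product `Q_{a,I} := Q_{a,a_0} ⋯ Q_{a,a_k}` for `I = {a_0 < ⋯ < a_k}`. -/
noncomputable def genQI {r : ℕ} (a : ℤ) (I : Finset (Fin r)) : EAlg r :=
  ((I.sort (· ≤ ·)).map (genQ a)).prod

/-- The left ideal `𝔍(r)` of `𝔈(r)` generated by the `P_{a,i}` with `a > 0`. -/
noncomputable def JId (r : ℕ) : Ideal (EAlg r) :=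
  Ideal.span {x | ∃ (a : ℤ) (i : Fin r), 0 < a ∧ x = genP a i}

/-- The quotient left `𝔈(r)`-module `Λ_r := 𝔈(r)/𝔍(r)`. -/
abbrev LambdaMod (r : ℕ) := EAlg r ⧸ JId r

/-!
Statement 12: for every `x ∈ 𝔍(r)` and `i ∈ [r]`, the elements `x·P_{0,i}`, `x·Q_{0,i}`,
`x·E`, `x·F·P_{0,[r]}·Q_{0,[r]}` lie in `𝔍(r)`; consequently right multiplication by each
of these elements descends to a well-defined additive endomorphism of `Λ_r = 𝔈(r)/𝔍(r)`.
-/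

section Helpers

lemma hGen {R : Type*} [Ring R] (c y p : R) (h : c * y = -(y * c)) :
    c * (y * p) = -(y * (c * p)) := by
  rw [← mul_assoc, h, neg_mul, mul_assoc]

variable {r : ℕ}

lemma hPsq (a : ℤ) (i : Fin r) : genP a i * genP a i = 0 := by
  have h := RingQuot.mkRingHom_rel (ERel.Psq a i)
  simp only [map_mul, map_zero] at h
  exact h

lemma hPP (a b : ℤ) (i j : Fin r) : genP a i * genP b j = -(genP b j * genP a i) := by
  have h := RingQuot.mkRingHom_rel (ERel.PP a b i j)
  simp only [map_mul, map_zero, map_add] at h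
  exact eq_neg_of_add_eq_zero_left h

lemma hPQ (a b : ℤ) (i j : Fin r) (hab : a ≠ b) :
    genP a i * genQ b j = -(genQ b j * genP a i) := by
  have h := RingQuot.mkRingHom_rel (ERel.PQ a b i j)
  rw [if_neg (fun h => hab h.2)] at h
  simp only [map_mul, map_zero, map_add] at h
  exact eq_neg_of_add_eq_zero_left h

lemma hEP (a : ℤ) (i : Fin r) : genE * genP a i = genP (a - 1) i * genE := by
  have h := RingQuot.mkRingHom_rel (ERel.EP a i)
  simp only [map_mul] at h
  exact h

lemma hEF : (genE : EAlg r) * genF = 1 := by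
  have h := RingQuot.mkRingHom_rel (ERel.EFone (r := r))
  simp only [map_mul, map_one] at h
  exact h

lemma hFE : (genF : EAlg r) * genE = 1 := by
  have h := RingQuot.mkRingHom_rel (ERel.FEone (r := r))
  simp only [map_mul, map_one] at h
  exact h

lemma hPF (a : ℤ) (i : Fin r) : genP a i * genF = genF * genP (a - 1) i := by
  calc genP a i * genF = (genF * genE) * genP a i * genF := by rw [hFE, one_mul]
    _ = genF * (genE * genP a i) * genF := by simp only [mul_assoc]
    _ = genF * genP (a - 1) i * (genE * genF) := by rw [hEP]; simp only [mul_assoc]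
    _ = _ := by rw [hEF, mul_one]

lemma hPmem {a : ℤ} (i : Fin r) (ha : 0 < a) : genP a i ∈ JId r :=
  Ideal.subset_span ⟨a, i, ha, rfl⟩

lemma hMul (y : EAlg r) (h : ∀ a i, 0 < a → genP a i * y ∈ JId r) :
    ∀ x ∈ JId r, x * y ∈ JId r := by
  intro x hx
  unfold JId at hx
  induction hx using Submodule.span_induction with
  | mem x hx => obtain ⟨a, i, ha, rfl⟩ := hx; exact h a i ha
  | zero => rw [zero_mul]; exact (JId r).zero_mem
  | add u v _ _ hu hv => rw [add_mul]; exact (JId r).add_mem hu hv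
  | smul c u _ hu => rw [smul_eq_mul, mul_assoc]; exact (JId r).mul_mem_left c hu

lemma hList (c : EAlg r) (hc : c ∈ JId r) (l : List (EAlg r))
    (h : ∀ y ∈ l, c * y = -(y * c)) : c * l.prod ∈ JId r := by
  induction l with
  | nil => simpa using hc
  | cons y l ih =>
    rw [List.prod_cons, hGen c y l.prod (h y (by simp))]
    exact (JId r).neg_mem ((JId r).mul_mem_left _ (ih fun z hz => h z (by simp [hz])))

lemma hZero (a : ℤ) (j : Fin r) (l : List (Fin r)) (h : j ∈ l) :
    genP a j * (l.map (genP a)).prod = 0 := by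
  induction l with
  | nil => simp at h
  | cons k l ih =>
    rw [List.map_cons, List.prod_cons]
    by_cases hk : j = k
    · rw [hk, ← mul_assoc, hPsq, zero_mul]
    · refine (hGen _ _ _ (hPP _ _ _ _)).trans ?_
      rw [ih (by simpa [hk] using h), mul_zero]
      exact neg_zero

lemma hP0 (i : Fin r) : ∀ x ∈ JId r, x * genP 0 i ∈ JId r :=
  hMul _ fun a j ha => by
    rw [hPP]; exact (JId r).neg_mem ((JId r).mul_mem_left _ (hPmem j ha))

lemma hQ0 (i : Fin r) : ∀ x ∈ JId r, x * genQ 0 i ∈ JId r :=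
  hMul _ fun a j ha => by
    rw [hPQ _ _ _ _ ha.ne']; exact (JId r).neg_mem ((JId r).mul_mem_left _ (hPmem j ha))

lemma hE0 : ∀ x ∈ JId r, x * genE ∈ JId r :=
  hMul _ fun a j ha => by
    have h := hEP (a + 1) j
    rw [add_sub_cancel_right] at h
    rw [← h]; exact (JId r).mul_mem_left _ (hPmem j (by omega))

lemma hF0 : ∀ x ∈ JId r,
    x * (genF * genPI 0 Finset.univ * genQI 0 Finset.univ) ∈ JId r :=
  hMul _ fun a j ha => by
    rw [← mul_assoc, ← mul_assoc, hPF, mul_assoc, mul_assoc]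
    apply (JId r).mul_mem_left
    by_cases h1 : a = 1
    · subst h1
      rw [← mul_assoc, sub_self, genPI, hZero _ _ _ (by simp), zero_mul]
      exact (JId r).zero_mem
    · rw [genPI, genQI, ← List.prod_append]
      apply hList _ (hPmem j (by omega))
      intro y hy
      rw [List.mem_append, List.mem_map, List.mem_map] at hy
      rcases hy with ⟨k, _, rfl⟩ | ⟨k, _, rfl⟩
      · exact hPP _ _ _ _
      · exact hPQ _ _ _ _ (by omega)

lemma hDesc (y : EAlg r) (h : ∀ x ∈ JId r, x * y ∈ JId r) :
    ∃ φ : LambdaMod r →+ LambdaMod r, ∀ x : EAlg r,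
      φ (Submodule.Quotient.mk x) = Submodule.Quotient.mk (x * y) :=
  ⟨(Submodule.mapQ (JId r) (JId r) (LinearMap.toSpanSingleton (EAlg r) (EAlg r) y)
    (fun x hx => h x hx)).toAddMonoidHom, fun _ => rfl⟩

end Helpers

theorem stmt_12 {r : ℕ} (hr : 0 < r) :
    (∀ x ∈ JId r, ∀ i : Fin r,
      x * genP 0 i ∈ JId r ∧ x * genQ 0 i ∈ JId r ∧ x * genE ∈ JId r ∧
        x * (genF * genPI 0 Finset.univ * genQI 0 Finset.univ) ∈ JId r) ∧
    (∀ i : Fin r, ∃ φ : LambdaMod r →+ LambdaMod r, ∀ x : EAlg r,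
      φ (Submodule.Quotient.mk x) = Submodule.Quotient.mk (x * genP 0 i)) ∧
    (∀ i : Fin r, ∃ φ : LambdaMod r →+ LambdaMod r, ∀ x : EAlg r,
      φ (Submodule.Quotient.mk x) = Submodule.Quotient.mk (x * genQ 0 i)) ∧
    (∃ φ : LambdaMod r →+ LambdaMod r, ∀ x : EAlg r,
      φ (Submodule.Quotient.mk x) = Submodule.Quotient.mk (x * genE)) ∧
    (∃ φ : LambdaMod r →+ LambdaMod r, ∀ x : EAlg r,
      φ (Submodule.Quotient.mk x) =
        Submodule.Quotient.mk (x * (genF * genPI 0 Finset.univ * genQI 0 Finset.univ))) := by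
  exact ⟨fun x hx i => ⟨hP0 i x hx, hQ0 i x hx, hE0 x hx, hF0 x hx⟩,
    fun i => hDesc _ (hP0 i), fun i => hDesc _ (hQ0 i), hDesc _ hE0, hDesc _ hF0⟩
end

section
/- Let V be an abelian group with an 𝔈(r)-representation, and let W₁ ⊆ W₂ ⊆ V be subgroups stable under all the operators P_{a,i}, Q_{a,i}, E, F. Assume W₂ is right admissible, i.e., for every w ∈ W₂ there exists a₀ ∈ ℤ such that P_{a,i}(w) = 0 for all a ≥ a₀ and all i ∈ [r]. Then for every w ∈ W₂ such that P_{a,i}(w) ∈ W₁ for all a > 0 and i ∈ [r], there exists v ∈ W₁ such that P_{a,i}(w − v) = 0 for all a > 0 and i ∈ [r]. -/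
/-- The ordered product `Q_{a,I} = Q_{a,a_0} ∘ ⋯ ∘ Q_{a,a_k}` for `I = {a_0 < ⋯ < a_k}`. -/
def qaProd {r : ℕ} {V : Type*} [AddCommGroup V] (Q : ℤ → Fin r → AddMonoid.End V)
    (a : ℤ) (I : Finset (Fin r)) : AddMonoid.End V :=
  ((I.sort (· ≤ ·)).map (Q a)).prod

/-- The ordered product `P_{a,I} = P_{a,a_k} ∘ ⋯ ∘ P_{a,a_0}` for `I = {a_0 < ⋯ < a_k}`. -/
def paProd {r : ℕ} {V : Type*} [AddCommGroup V] (P : ℤ → Fin r → AddMonoid.End V)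
    (a : ℤ) (I : Finset (Fin r)) : AddMonoid.End V :=
  ((I.sort (· ≤ ·)).reverse.map (P a)).prod

/-- An `𝔈(r)`-representation on an abelian group `V`: operators `P_{a,i}`, `Q_{a,i}`
and a pair of mutually inverse shifts `E`, `F = E⁻¹`, subject to the defining relations
of the infinite-dimensional Clifford algebra `𝔈(r)`. -/
structure ERep (r : ℕ) (V : Type*) [AddCommGroup V] where
  P : ℤ → Fin r → AddMonoid.End V
  Q : ℤ → Fin r → AddMonoid.End V
  E : AddMonoid.End V
  F : AddMonoid.End V
  EF_eq : E * F = 1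
  FE_eq : F * E = 1
  P_sq : ∀ (a : ℤ) (i : Fin r), P a i * P a i = 0
  Q_sq : ∀ (a : ℤ) (i : Fin r), Q a i * Q a i = 0
  E_P : ∀ (a : ℤ) (i : Fin r), E * P a i = P (a - 1) i * E
  E_Q : ∀ (a : ℤ) (i : Fin r), E * Q a i = Q (a - 1) i * E
  P_P : ∀ (a b : ℤ) (i j : Fin r), P a i * P b j + P b j * P a i = 0
  Q_Q : ∀ (a b : ℤ) (i j : Fin r), Q a i * Q b j + Q b j * Q a i = 0
  P_Q : ∀ (a b : ℤ) (i j : Fin r),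
    P a i * Q b j + Q b j * P a i = if i = j ∧ a = b then 1 else 0

/-!
Statement 14: projectivity-type lifting property.  If `W₁ ⊆ W₂ ⊆ V` are subgroups stable
under all operators, `W₂` right admissible, then any `w ∈ W₂` all of whose `P_{a,i}`-images
(`a > 0`) lie in `W₁` differs by an element `v ∈ W₁` from an element killed by all
`P_{a,i}` with `a > 0`.
-/

theorem end_mul_app {V : Type} [AddCommGroup V] (f g : AddMonoid.End V) (x : V) :
    (f * g) x = f (g x) := rfl

theorem end_add_app {V : Type} [AddCommGroup V] (f g : AddMonoid.End V) (x : V) :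
    (f + g) x = f x + g x := rfl

theorem stmt_14 {r : ℕ} (hr : 0 < r) {V : Type} [AddCommGroup V] (ρ : ERep r V)
    (W₁ W₂ : AddSubgroup V) (h12 : W₁ ≤ W₂)
    (hstab1 : ∀ v ∈ W₁, (∀ (a : ℤ) (i : Fin r), ρ.P a i v ∈ W₁ ∧ ρ.Q a i v ∈ W₁) ∧
      ρ.E v ∈ W₁ ∧ ρ.F v ∈ W₁)
    (hstab2 : ∀ v ∈ W₂, (∀ (a : ℤ) (i : Fin r), ρ.P a i v ∈ W₂ ∧ ρ.Q a i v ∈ W₂) ∧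
      ρ.E v ∈ W₂ ∧ ρ.F v ∈ W₂)
    (hadm : ∀ w ∈ W₂, ∃ a₀ : ℤ, ∀ a : ℤ, a₀ ≤ a → ∀ i : Fin r, ρ.P a i w = 0) :
    ∀ w ∈ W₂, (∀ a : ℤ, 0 < a → ∀ i : Fin r, ρ.P a i w ∈ W₁) →
      ∃ v ∈ W₁, ∀ a : ℤ, 0 < a → ∀ i : Fin r, ρ.P a i (w - v) = 0 := by
  intro w hw hP
  have key : ∀ S : Finset (ℤ × Fin r), (∀ t ∈ S, 0 < t.1) → ∃ v ∈ W₁,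
      (∀ t ∈ S, ρ.P t.1 t.2 (w - v) = 0) ∧
      ∀ a i, ρ.P a i w = 0 → ρ.P a i (w - v) = 0 := by
    intro S
    induction S using Finset.induction_on with
    | empty => intro _; exact ⟨0, W₁.zero_mem, by simp, by simp⟩
    | insert s S hs ih =>
      intro hpos
      obtain ⟨v, hv, h1, h2⟩ := ih (fun t ht => hpos t (Finset.mem_insert_of_mem ht))
      have hmem : ρ.P s.1 s.2 (w - v) ∈ W₁ := by
        rw [map_sub]
        exact W₁.sub_mem (hP _ (hpos s (Finset.mem_insert_self _ _)) _)
          ((hstab1 v hv).1 _ _).1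
      have hself : ρ.P s.1 s.2 (w - v - ρ.Q s.1 s.2 (ρ.P s.1 s.2 (w - v))) = 0 := by
        generalize w - v = u
        have e1 := DFunLike.congr_fun (ρ.P_Q s.1 s.1 s.2 s.2) (ρ.P s.1 s.2 u)
        have e2 := DFunLike.congr_fun (ρ.P_sq s.1 s.2) u
        simp only [and_self, if_true, end_mul_app, end_add_app, AddMonoid.End.one_apply, AddMonoid.End.zero_apply] at e1 e2
        rw [e2, map_zero, add_zero] at e1
        rw [map_sub, e1, sub_self]
      have hoth : ∀ a i, ρ.P a i (w - v) = 0 →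
          ρ.P a i (w - v - ρ.Q s.1 s.2 (ρ.P s.1 s.2 (w - v))) = 0 := by
        intro a i h0
        by_cases hc : i = s.2 ∧ a = s.1
        · obtain ⟨rfl, rfl⟩ := hc
          exact hself
        · generalize w - v = u at h0
          have e1 := DFunLike.congr_fun (ρ.P_Q a s.1 i s.2) (ρ.P s.1 s.2 u)
          have e2 := DFunLike.congr_fun (ρ.P_P a s.1 i s.2) u
          rw [if_neg hc] at e1
          simp only [end_mul_app, end_add_app,
            AddMonoid.End.zero_apply] at e1 e2
          rw [h0, map_zero, add_zero] at e2
          rw [e2, map_zero, add_zero] at e1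
          rw [map_sub, e1, h0, sub_self]
      refine ⟨v + ρ.Q s.1 s.2 (ρ.P s.1 s.2 (w - v)),
        W₁.add_mem hv ((hstab1 _ hmem).1 _ _).2, ?_, ?_⟩
      · intro t ht
        rw [← sub_sub]
        rcases Finset.mem_insert.1 ht with rfl | ht
        · exact hself
        · exact hoth _ _ (h1 t ht)
      · intro a i h
        rw [← sub_sub]
        exact hoth _ _ (h2 a i h)
  obtain ⟨a₀, ha₀⟩ := hadm w hw
  obtain ⟨v, hv, h1, h2⟩ := key (Finset.Ioo 0 a₀ ×ˢ Finset.univ) (by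
    intro t ht
    simp only [Finset.mem_product, Finset.mem_Ioo] at ht
    exact ht.1.1)
  refine ⟨v, hv, fun a ha i => ?_⟩
  by_cases h : a₀ ≤ a
  · exact h2 a i (ha₀ a h i)
  · exact h1 (a, i) (by simp; omega)
end

section
/- Let V be an abelian group carrying an 𝓔(r)-representation, with the derived operators e_I, f_I and the inductively defined families p_{a,i}, q_{a,i} (a ≤ 0, i ∈ [r]). Then for all integers a ≤ 0 and all i ∈ [r]: e ∘ p_{a,i} = p_{a−1,i} ∘ e, f ∘ p_{a−1,i} = p_{a,i} ∘ f, e ∘ q_{a,i} = q_{a−1,i} ∘ e, and f ∘ q_{a−1,i} = q_{a,i} ∘ f. -/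
/-- An `𝓔(r)`-representation on an abelian group `V`: a `Cl(r)`-representation `(p, q)`
together with endomorphisms `e`, `f` satisfying `pᵢ∘e = 0`, `f∘qᵢ = 0`, `f∘e = id` and
`e∘f = p_{[r]}∘q_{[r]}`. -/
structure SRep (r : ℕ) (V : Type*) [AddCommGroup V] where
  p : Fin r → AddMonoid.End V
  q : Fin r → AddMonoid.End V
  e : AddMonoid.End V
  f : AddMonoid.End V
  p_sq : ∀ i, p i * p i = 0
  q_sq : ∀ i, q i * q i = 0
  p_p : ∀ i j, p i * p j + p j * p i = 0
  q_q : ∀ i j, q i * q j + q j * q i = 0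
  p_q : ∀ i j, p i * q j + q j * p i = if i = j then 1 else 0
  p_e : ∀ i, p i * e = 0
  f_q : ∀ i, f * q i = 0
  f_e : f * e = 1
  e_f : e * f = pProd p Finset.univ * qProd q Finset.univ

namespace SRep

variable {r : ℕ} {V : Type*} [AddCommGroup V]

/-- The derived operator `e_I := q_I ∘ e`. -/
def eI (ρ : SRep r V) (I : Finset (Fin r)) : AddMonoid.End V := qProd ρ.q I * ρ.e

/-- The derived operator `f_I := f ∘ p_I`. -/
def fI (ρ : SRep r V) (I : Finset (Fin r)) : AddMonoid.End V := ρ.f * pProd ρ.p I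

/-- The inductively defined family `p_{-n,i}`:  `p_{0,i} := pᵢ` and
`p_{a,i} := Σ_{I⊆[r]} (−1)^{|I|} e_I ∘ p_{a+1,i} ∘ f_I` for `a < 0`. -/
noncomputable def pNeg (ρ : SRep r V) : ℕ → Fin r → AddMonoid.End V
  | 0 => ρ.p
  | n + 1 => fun i =>
      ∑ I : Finset (Fin r), ((-1 : ℤ) ^ I.card) • (ρ.eI I * ρ.pNeg n i * ρ.fI I)

/-- The inductively defined family `q_{-n,i}`:  `q_{0,i} := qᵢ` and
`q_{a,i} := Σ_{I⊆[r]} (−1)^{|I|} e_I ∘ q_{a+1,i} ∘ f_I` for `a < 0`. -/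
noncomputable def qNeg (ρ : SRep r V) : ℕ → Fin r → AddMonoid.End V
  | 0 => ρ.q
  | n + 1 => fun i =>
      ∑ I : Finset (Fin r), ((-1 : ℤ) ^ I.card) • (ρ.eI I * ρ.qNeg n i * ρ.fI I)

/-- The operator `p_{a,i}` for `a ≤ 0`. -/
noncomputable def pA (ρ : SRep r V) (a : ℤ) (i : Fin r) : AddMonoid.End V :=
  ρ.pNeg (-a).toNat i

/-- The operator `q_{a,i}` for `a ≤ 0`. -/
noncomputable def qA (ρ : SRep r V) (a : ℤ) (i : Fin r) : AddMonoid.End V :=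
  ρ.qNeg (-a).toNat i

end SRep

/-!
Statement 15: intertwining of `e`, `f` with the inductively defined families:
`e∘p_{a,i} = p_{a−1,i}∘e`, `f∘p_{a−1,i} = p_{a,i}∘f`, `e∘q_{a,i} = q_{a−1,i}∘e`,
`f∘q_{a−1,i} = q_{a,i}∘f` for all `a ≤ 0`.
-/

theorem f_qProd_aux {r : ℕ} {V : Type*} [AddCommGroup V] (ρ : SRep r V)
    (I : Finset (Fin r)) (hI : I ≠ ∅) : ρ.f * qProd ρ.q I = 0 := by
  unfold qProd
  cases h : I.sort (· ≤ ·) with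
  | nil =>
    exact absurd (by have h2 := Finset.sort_toFinset I (· ≤ ·); rw [h] at h2; exact h2.symm) hI
  | cons a l => rw [List.map_cons, List.prod_cons, ← mul_assoc, ρ.f_q, zero_mul]

theorem pProd_e_aux {r : ℕ} {V : Type*} [AddCommGroup V] (ρ : SRep r V)
    (I : Finset (Fin r)) (hI : I ≠ ∅) : pProd ρ.p I * ρ.e = 0 := by
  unfold pProd
  cases h : I.sort (· ≤ ·) with
  | nil =>
    exact absurd (by have h2 := Finset.sort_toFinset I (· ≤ ·); rw [h] at h2; exact h2.symm) hI
  | cons a l => simp [mul_assoc, ρ.p_e]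

theorem sum_e_aux {r : ℕ} {V : Type*} [AddCommGroup V] (ρ : SRep r V)
    (x : AddMonoid.End V) :
    (∑ I : Finset (Fin r), ((-1 : ℤ) ^ I.card) • (ρ.eI I * x * ρ.fI I)) * ρ.e = ρ.e * x := by
  rw [Finset.sum_mul, Finset.sum_eq_single ∅]
  · simp [SRep.eI, SRep.fI, qProd, pProd, mul_assoc, ρ.f_e]
  · intro I _ hI
    rw [smul_mul_assoc, SRep.fI, mul_assoc, mul_assoc, mul_assoc, pProd_e_aux ρ I hI]
    simp
  · simp

theorem f_sum_aux {r : ℕ} {V : Type*} [AddCommGroup V] (ρ : SRep r V)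
    (x : AddMonoid.End V) :
    ρ.f * (∑ I : Finset (Fin r), ((-1 : ℤ) ^ I.card) • (ρ.eI I * x * ρ.fI I)) = x * ρ.f := by
  rw [Finset.mul_sum, Finset.sum_eq_single ∅]
  · simp [SRep.eI, SRep.fI, qProd, pProd, ← mul_assoc, ρ.f_e]
  · intro I _ hI
    rw [mul_smul_comm, SRep.eI, ← mul_assoc, ← mul_assoc, ← mul_assoc, f_qProd_aux ρ I hI]
    simp
  · simp

theorem stmt_15 {r : ℕ} (hr : 0 < r) {V : Type} [AddCommGroup V] (ρ : SRep r V) :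
    ∀ a : ℤ, a ≤ 0 → ∀ i : Fin r,
      ρ.e * ρ.pA a i = ρ.pA (a - 1) i * ρ.e ∧
      ρ.f * ρ.pA (a - 1) i = ρ.pA a i * ρ.f ∧
      ρ.e * ρ.qA a i = ρ.qA (a - 1) i * ρ.e ∧
      ρ.f * ρ.qA (a - 1) i = ρ.qA a i * ρ.f := by
  intro a ha i
  have h : (-(a - 1)).toNat = (-a).toNat + 1 := by omega
  unfold SRep.pA SRep.qA
  rw [h]
  exact ⟨(sum_e_aux ρ _).symm, f_sum_aux ρ _, (sum_e_aux ρ _).symm, f_sum_aux ρ _⟩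
end

section
/- Let V be an abelian group carrying an 𝓔(r)-representation, with the derived operators e_I, f_I and the inductively defined families p_{a,i}, q_{a,i} (a ≤ 0, i ∈ [r]). Then for all integers a, b ≤ 0 and all i, j ∈ [r]: p_{a,i}∘p_{a,i} = 0, q_{a,i}∘q_{a,i} = 0, p_{a,i}∘p_{b,j} + p_{b,j}∘p_{a,i} = 0, q_{a,i}∘q_{b,j} + q_{b,j}∘q_{a,i} = 0, and p_{a,i}∘q_{b,j} + q_{b,j}∘p_{a,i} = δ_{ij}δ_{ab}·id_V. -/
/-!
Statement 16: the inductively defined families `p_{a,i}`, `q_{a,i}` (`a ≤ 0`) satisfy the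
Clifford relations `p_{a,i}² = q_{a,i}² = 0`, `{p_{a,i}, p_{b,j}} = {q_{a,i}, q_{b,j}} = 0`
and `{p_{a,i}, q_{b,j}} = δ_{ij}δ_{ab}·id`.
-/

namespace SRep

variable {r : ℕ} {V : Type*} [AddCommGroup V]

/-- Signed fold. -/
def UL (ρ : SRep r V) (X : AddMonoid.End V) : List (Fin r) → AddMonoid.End V
  | [] => X
  | i :: l => UL ρ X l - ρ.q i * UL ρ X l * ρ.p i

/-- Unsigned fold. -/
def WL (ρ : SRep r V) (X : AddMonoid.End V) : List (Fin r) → AddMonoid.End V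
  | [] => X
  | i :: l => WL ρ X l + ρ.q i * WL ρ X l * ρ.p i

theorem pq_same (ρ : SRep r V) (i : Fin r) : ρ.p i * ρ.q i = 1 - ρ.q i * ρ.p i := by
  have := ρ.p_q i i
  rw [if_pos rfl] at this
  exact eq_sub_of_add_eq this

theorem pq_ne (ρ : SRep r V) {i j : Fin r} (h : i ≠ j) : ρ.p i * ρ.q j = - (ρ.q j * ρ.p i) := by
  have := ρ.p_q i j
  rw [if_neg h] at this
  exact eq_neg_of_add_eq_zero_left this

theorem pp (ρ : SRep r V) (i j : Fin r) : ρ.p i * ρ.p j = - (ρ.p j * ρ.p i) :=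
  eq_neg_of_add_eq_zero_left (ρ.p_p i j)

theorem qq (ρ : SRep r V) (i j : Fin r) : ρ.q i * ρ.q j = - (ρ.q j * ρ.q i) :=
  eq_neg_of_add_eq_zero_left (ρ.q_q i j)

theorem p_UL (ρ : SRep r V) (x : AddMonoid.End V) (j : Fin r) (l : List (Fin r)) (h : j ∉ l) :
    ρ.p j * ρ.UL (ρ.e * x * ρ.f) l = 0 := by
  induction l with
  | nil => simp only [UL]; rw [← mul_assoc, ← mul_assoc, ρ.p_e, zero_mul, zero_mul]
  | cons i l ih =>
    simp only [List.mem_cons, not_or] at h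
    simp only [UL]
    rw [mul_sub, ih h.2, ← mul_assoc, ← mul_assoc, ρ.pq_ne h.1, neg_mul, mul_assoc (ρ.q i), ih h.2]
    simp

theorem UL_q (ρ : SRep r V) (x : AddMonoid.End V) (j : Fin r) (l : List (Fin r)) (h : j ∉ l) :
    ρ.UL (ρ.e * x * ρ.f) l * ρ.q j = 0 := by
  induction l with
  | nil => simp only [UL]; rw [mul_assoc, ρ.f_q, mul_zero]
  | cons i l ih =>
    simp only [List.mem_cons, not_or] at h
    simp only [UL]
    rw [sub_mul, ih h.2, mul_assoc, ρ.pq_ne (Ne.symm h.1), mul_neg, mul_assoc,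
      ← mul_assoc _ (ρ.q j), ih h.2]
    simp

theorem p_anti (ρ : SRep r V) (x : AddMonoid.End V) (j : Fin r) (l : List (Fin r)) (hl : l.Nodup)
    (h : j ∈ l) :
    ρ.p j * ρ.UL (ρ.e * x * ρ.f) l = - (ρ.UL (ρ.e * x * ρ.f) l * ρ.p j) := by
  induction l with
  | nil => simp at h
  | cons i l ih =>
    rw [List.nodup_cons] at hl
    simp only [UL]
    by_cases hj : j = i
    · subst hj
      rw [mul_sub, p_UL ρ x j l hl.1, ← mul_assoc, ← mul_assoc, pq_same, sub_mul, mul_assoc (ρ.q j),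
        p_UL ρ x j l hl.1, sub_mul (ρ.UL _ l), mul_assoc _ (ρ.p j) (ρ.p j), ρ.p_sq]
      simp
    · have hjl : j ∈ l := by simpa [hj] using h
      have ih := ih hl.2 hjl
      rw [mul_sub, ih, ← mul_assoc, ← mul_assoc, pq_ne ρ hj, neg_mul, mul_assoc (ρ.q i), ih,
        sub_mul, mul_assoc _ (ρ.p i) (ρ.p j), pp ρ i j]
      noncomm_ring

theorem q_anti (ρ : SRep r V) (x : AddMonoid.End V) (j : Fin r) (l : List (Fin r)) (hl : l.Nodup)
    (h : j ∈ l) :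
    ρ.q j * ρ.UL (ρ.e * x * ρ.f) l = - (ρ.UL (ρ.e * x * ρ.f) l * ρ.q j) := by
  induction l with
  | nil => simp at h
  | cons i l ih =>
    rw [List.nodup_cons] at hl
    simp only [UL]
    by_cases hj : j = i
    · subst hj
      rw [mul_sub, sub_mul, UL_q ρ x j l hl.1, mul_assoc _ (ρ.p j) (ρ.q j), pq_same, mul_sub,
        mul_one, mul_assoc (ρ.q j) _ (ρ.q j * ρ.p j), ← mul_assoc _ (ρ.q j) (ρ.p j),
        UL_q ρ x j l hl.1, mul_assoc (ρ.q j) _ (ρ.p j), ← mul_assoc (ρ.q j) (ρ.q j), ρ.q_sq]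
      simp
    · have hjl : j ∈ l := by simpa [hj] using h
      have ih := ih hl.2 hjl
      rw [mul_sub, ih, ← mul_assoc, ← mul_assoc, qq ρ j i, neg_mul, mul_assoc (ρ.q i), ih,
        sub_mul, mul_assoc _ (ρ.p i) (ρ.q j), pq_ne ρ (Ne.symm hj)]
      noncomm_ring

theorem UL_mul (ρ : SRep r V) (x y : AddMonoid.End V) (l : List (Fin r)) (hl : l.Nodup) :
    ρ.UL (ρ.e * x * ρ.f) l * ρ.UL (ρ.e * y * ρ.f) l = ρ.WL (ρ.e * (x * y) * ρ.f) l := by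
  induction l with
  | nil =>
    simp only [UL, WL]
    calc ρ.e * x * ρ.f * (ρ.e * y * ρ.f) = ρ.e * x * (ρ.f * ρ.e) * y * ρ.f := by
          simp only [mul_assoc]
      _ = _ := by rw [ρ.f_e]; simp only [mul_assoc, one_mul]
  | cons i l ih =>
    rw [List.nodup_cons] at hl
    simp only [UL, WL]
    rw [← ih hl.2]
    have h1 := UL_q ρ x i l hl.1
    have h2 := p_UL ρ y i l hl.1
    have h3 := pq_same ρ i
    generalize ρ.UL (ρ.e * x * ρ.f) l = A at *
    generalize ρ.UL (ρ.e * y * ρ.f) l = B at *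
    calc (A - ρ.q i * A * ρ.p i) * (B - ρ.q i * B * ρ.p i)
        = A * B - (A * ρ.q i) * B * ρ.p i - ρ.q i * A * (ρ.p i * B)
          + ρ.q i * A * (ρ.p i * ρ.q i) * B * ρ.p i := by noncomm_ring
      _ = A * B - (A * ρ.q i) * B * ρ.p i - ρ.q i * A * (ρ.p i * B)
          + ρ.q i * A * B * ρ.p i - ρ.q i * (A * ρ.q i) * (ρ.p i * B) * ρ.p i := by
            rw [h3]; noncomm_ring
      _ = _ := by rw [h1, h2]; noncomm_ring

theorem WL_add (ρ : SRep r V) (X Y : AddMonoid.End V) (l : List (Fin r)) :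
    ρ.WL (X + Y) l = ρ.WL X l + ρ.WL Y l := by
  induction l with
  | nil => rfl
  | cons i l ih => simp only [WL]; rw [ih]; noncomm_ring

theorem WL_zero (ρ : SRep r V) (l : List (Fin r)) : ρ.WL 0 l = 0 := by
  induction l with
  | nil => rfl
  | cons i l ih => simp only [WL]; rw [ih]; noncomm_ring

theorem comm_p (ρ : SRep r V) {i j : Fin r} (h : i ≠ j) : Commute (ρ.p i * ρ.q i) (ρ.p j) := by
  unfold Commute SemiconjBy
  have h1 : ρ.q i * ρ.p j = - (ρ.p j * ρ.q i) := by rw [pq_ne ρ h.symm, neg_neg]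
  rw [mul_assoc, h1, mul_neg, ← mul_assoc, pp ρ i j, neg_mul, neg_neg, mul_assoc]

theorem comm_q (ρ : SRep r V) {i j : Fin r} (h : i ≠ j) : Commute (ρ.p i * ρ.q i) (ρ.q j) := by
  unfold Commute SemiconjBy
  rw [mul_assoc, qq ρ i j, mul_neg, ← mul_assoc, pq_ne ρ h, neg_mul, neg_neg, mul_assoc]

theorem PP_cons (ρ : SRep r V) (i : Fin r) (l : List (Fin r)) (h : i ∉ l) :
    ((i :: l).reverse.map ρ.p).prod * ((i :: l).map ρ.q).prod
      = ρ.p i * ρ.q i * ((l.reverse.map ρ.p).prod * (l.map ρ.q).prod) := by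
  have hc : Commute (ρ.p i * ρ.q i) (l.reverse.map ρ.p).prod := by
    apply Commute.list_prod_right
    intro x hx
    simp only [List.mem_map, List.mem_reverse] at hx
    obtain ⟨j, hj, rfl⟩ := hx
    exact comm_p ρ (fun e => h (e ▸ hj))
  simp only [List.reverse_cons, List.map_append, List.prod_append, List.map_cons, List.map_nil,
    List.prod_cons, List.prod_nil, mul_one]
  rw [← mul_assoc (ρ.p i * ρ.q i), hc.eq]
  simp only [mul_assoc]

theorem WL_PP (ρ : SRep r V) (l : List (Fin r)) (hl : l.Nodup) (Z : AddMonoid.End V)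
    (hp : ∀ i ∈ l, Commute Z (ρ.p i)) (hq : ∀ i ∈ l, Commute Z (ρ.q i)) :
    ρ.WL (Z * ((l.reverse.map ρ.p).prod * (l.map ρ.q).prod)) l = Z := by
  induction l generalizing Z with
  | nil => simp [WL]
  | cons i l ih =>
    rw [List.nodup_cons] at hl
    rw [PP_cons ρ i l hl.1, ← mul_assoc]
    simp only [WL]
    rw [ih hl.2 (Z * (ρ.p i * ρ.q i))
      (fun j hj => (hp j (List.mem_cons_of_mem _ hj)).mul_left
        (comm_p ρ (fun e => hl.1 (e ▸ hj))))
      (fun j hj => (hq j (List.mem_cons_of_mem _ hj)).mul_left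
        (comm_q ρ (fun e => hl.1 (e ▸ hj))))]
    have h1 := (hq i List.mem_cons_self).eq
    have h3 := pq_same ρ i
    have h4 := ρ.p_sq i
    calc Z * (ρ.p i * ρ.q i) + ρ.q i * (Z * (ρ.p i * ρ.q i)) * ρ.p i
        = Z * (ρ.p i * ρ.q i) + (ρ.q i * Z) * (ρ.p i * ρ.q i) * ρ.p i := by noncomm_ring
      _ = Z * (1 - ρ.q i * ρ.p i) + (Z * ρ.q i) * (1 - ρ.q i * ρ.p i) * ρ.p i := by rw [← h1, h3]
      _ = Z - Z * ρ.q i * ρ.q i * (ρ.p i * ρ.p i) := by noncomm_ring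
      _ = Z := by rw [h4]; simp

theorem WL_one (ρ : SRep r V) :
    ρ.WL (ρ.e * 1 * ρ.f) ((Finset.univ : Finset (Fin r)).sort (· ≤ ·)) = 1 := by
  rw [mul_one, ρ.e_f]
  have := WL_PP ρ ((Finset.univ : Finset (Fin r)).sort (· ≤ ·)) (Finset.sort_nodup _ _) 1
    (fun i _ => Commute.one_left _) (fun i _ => Commute.one_left _)
  rw [one_mul] at this
  exact this

theorem sort_ins {a : Fin r} {s : Finset (Fin r)} (h : ∀ x ∈ s, a < x) :
    (insert a s).sort (· ≤ ·) = a :: s.sort (· ≤ ·) :=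
  Finset.sort_insert (r := (· ≤ ·)) (fun b hb => (h b hb).le) (fun ha => lt_irrefl _ (h a ha))

theorem sum_eq (ρ : SRep r V) (x : AddMonoid.End V) (s : Finset (Fin r)) :
    ∑ I ∈ s.powerset, ((-1 : ℤ) ^ I.card) • (ρ.eI I * x * ρ.fI I)
      = ρ.UL (ρ.e * x * ρ.f) (s.sort (· ≤ ·)) := by
  induction s using Finset.induction_on_min with
  | empty => simp [eI, fI, qProd, pProd, UL]
  | insert a s h ih =>
    have ha : a ∉ s := fun ha => lt_irrefl _ (h a ha)
    rw [Finset.sum_powerset_insert ha, ih, sort_ins h]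
    simp only [UL]
    rw [← ih, sub_eq_add_neg, Finset.mul_sum, Finset.sum_mul, ← Finset.sum_neg_distrib]
    congr 1
    apply Finset.sum_congr rfl
    intro I hI
    rw [Finset.mem_powerset] at hI
    have h' : ∀ x ∈ I, a < x := fun x hx => h x (hI hx)
    rw [Finset.card_insert_of_notMem (fun hh => ha (hI hh))]
    simp only [eI, fI, qProd, pProd]
    rw [sort_ins h']
    simp only [List.reverse_cons, List.map_append, List.prod_append, List.map_cons, List.map_nil,
      List.prod_cons, List.prod_nil, mul_one]
    rw [pow_succ, mul_smul_comm, smul_mul_assoc, mul_neg_one, neg_smul]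
    simp only [mul_assoc]

/-- The transfer operator. -/
noncomputable def TT (ρ : SRep r V) (x : AddMonoid.End V) : AddMonoid.End V :=
  ρ.UL (ρ.e * x * ρ.f) ((Finset.univ : Finset (Fin r)).sort (· ≤ ·))

theorem pNeg_succ (ρ : SRep r V) (n : ℕ) (i : Fin r) : ρ.pNeg (n + 1) i = ρ.TT (ρ.pNeg n i) := by
  rw [TT, ← sum_eq, Finset.powerset_univ]; rfl

theorem qNeg_succ (ρ : SRep r V) (n : ℕ) (i : Fin r) : ρ.qNeg (n + 1) i = ρ.TT (ρ.qNeg n i) := by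
  rw [TT, ← sum_eq, Finset.powerset_univ]; rfl

theorem p_TT (ρ : SRep r V) (x : AddMonoid.End V) (j : Fin r) :
    ρ.p j * ρ.TT x + ρ.TT x * ρ.p j = 0 := by
  rw [TT, p_anti ρ x j _ (Finset.sort_nodup _ _) (by simp), neg_add_cancel]

theorem q_TT (ρ : SRep r V) (x : AddMonoid.End V) (j : Fin r) :
    ρ.q j * ρ.TT x + ρ.TT x * ρ.q j = 0 := by
  rw [TT, q_anti ρ x j _ (Finset.sort_nodup _ _) (by simp), neg_add_cancel]

theorem TT_zero (ρ : SRep r V) {x y : AddMonoid.End V} (h : x * y + y * x = 0) :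
    ρ.TT x * ρ.TT y + ρ.TT y * ρ.TT x = 0 := by
  rw [TT, TT, UL_mul _ _ _ _ (Finset.sort_nodup _ _), UL_mul _ _ _ _ (Finset.sort_nodup _ _),
    ← WL_add, ← add_mul, ← mul_add, h, mul_zero, zero_mul, WL_zero]

theorem TT_one (ρ : SRep r V) {x y : AddMonoid.End V} (h : x * y + y * x = 1) :
    ρ.TT x * ρ.TT y + ρ.TT y * ρ.TT x = 1 := by
  rw [TT, TT, UL_mul _ _ _ _ (Finset.sort_nodup _ _), UL_mul _ _ _ _ (Finset.sort_nodup _ _),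
    ← WL_add, ← add_mul, ← mul_add, h, WL_one]

theorem TT_sq (ρ : SRep r V) {x : AddMonoid.End V} (h : x * x = 0) : ρ.TT x * ρ.TT x = 0 := by
  rw [TT, UL_mul _ _ _ _ (Finset.sort_nodup _ _), h, mul_zero, zero_mul, WL_zero]

theorem pNeg_sq (ρ : SRep r V) (n : ℕ) (i : Fin r) : ρ.pNeg n i * ρ.pNeg n i = 0 := by
  induction n with
  | zero => exact ρ.p_sq i
  | succ n ih => rw [pNeg_succ]; exact TT_sq ρ ih

theorem qNeg_sq (ρ : SRep r V) (n : ℕ) (i : Fin r) : ρ.qNeg n i * ρ.qNeg n i = 0 := by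
  induction n with
  | zero => exact ρ.q_sq i
  | succ n ih => rw [qNeg_succ]; exact TT_sq ρ ih

theorem pNeg_pNeg (ρ : SRep r V) (i j : Fin r) (n m : ℕ) :
    ρ.pNeg n i * ρ.pNeg m j + ρ.pNeg m j * ρ.pNeg n i = 0 := by
  induction n generalizing m with
  | zero =>
    cases m with
    | zero => exact ρ.p_p i j
    | succ m => rw [pNeg_succ]; exact p_TT ρ _ i
  | succ n ih =>
    cases m with
    | zero => rw [pNeg_succ, add_comm]; exact p_TT ρ _ j
    | succ m => rw [pNeg_succ, pNeg_succ]; exact TT_zero ρ (ih m)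

theorem qNeg_qNeg (ρ : SRep r V) (i j : Fin r) (n m : ℕ) :
    ρ.qNeg n i * ρ.qNeg m j + ρ.qNeg m j * ρ.qNeg n i = 0 := by
  induction n generalizing m with
  | zero =>
    cases m with
    | zero => exact ρ.q_q i j
    | succ m => rw [qNeg_succ]; exact q_TT ρ _ i
  | succ n ih =>
    cases m with
    | zero => rw [qNeg_succ, add_comm]; exact q_TT ρ _ j
    | succ m => rw [qNeg_succ, qNeg_succ]; exact TT_zero ρ (ih m)

theorem pNeg_qNeg (ρ : SRep r V) (i j : Fin r) (n m : ℕ) :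
    ρ.pNeg n i * ρ.qNeg m j + ρ.qNeg m j * ρ.pNeg n i = if i = j ∧ n = m then 1 else 0 := by
  induction n generalizing m with
  | zero =>
    cases m with
    | zero => simpa [pNeg, qNeg] using ρ.p_q i j
    | succ m => rw [qNeg_succ, if_neg (by simp)]; exact p_TT ρ _ i
  | succ n ih =>
    cases m with
    | zero => rw [pNeg_succ, add_comm, if_neg (by simp)]; exact q_TT ρ _ j
    | succ m =>
      rw [pNeg_succ, qNeg_succ]
      have ih := ih m
      by_cases h : i = j ∧ n = m
      · rw [if_pos h] at ih
        rw [if_pos (by simpa using h)]; exact TT_one ρ ih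
      · rw [if_neg h] at ih
        rw [if_neg (by simpa using h)]; exact TT_zero ρ ih

end SRep

theorem stmt_16 {r : ℕ} (hr : 0 < r) {V : Type} [AddCommGroup V] (ρ : SRep r V) :
    ∀ a : ℤ, a ≤ 0 → ∀ b : ℤ, b ≤ 0 → ∀ i j : Fin r,
      ρ.pA a i * ρ.pA a i = 0 ∧
      ρ.qA a i * ρ.qA a i = 0 ∧
      ρ.pA a i * ρ.pA b j + ρ.pA b j * ρ.pA a i = 0 ∧
      ρ.qA a i * ρ.qA b j + ρ.qA b j * ρ.qA a i = 0 ∧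
      ρ.pA a i * ρ.qA b j + ρ.qA b j * ρ.pA a i =
        if i = j ∧ a = b then 1 else 0 := by
  intro a ha b hb i j
  refine ⟨ρ.pNeg_sq _ i, ρ.qNeg_sq _ i, ρ.pNeg_pNeg i j _ _, ρ.qNeg_qNeg i j _ _, ?_⟩
  have h := ρ.pNeg_qNeg i j (-a).toNat (-b).toNat
  have hab : (-a).toNat = (-b).toNat ↔ a = b := by omega
  simp only [hab] at h
  exact h
end
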